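/- Let β ∈ (0,1) and 1 ≤ q < n - nβ. If G ⊂ ℝⁿ is a bounded domain satisfying a β-quasihyperbolic boundary condition, then G supports the (q, n-nβ)-Poincaré inequality: there exists c < ∞ with (∫_G |u - u_G|^q)^{1/q} ≤ c (∫_G |∇u|^{n-nβ})^{1/(n-nβ)} for all u ∈ W^{1, n-nβ}(G). -/

import Mathlib

open MeasureTheory ENNReal

/-- The quasihyperbolic distance `k_G(x, y) = inf_γ ∫_γ ds / dist(z, ∂G)`, the infimum
being over rectifiable curves in `G` from `x` to `y`, parametrized by arc length
(encoded as `1`-Lipschitz parametrizations). -/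
noncomputable def qhDist {n : ℕ} (G : Set (EuclideanSpace ℝ (Fin n)))
    (x y : EuclideanSpace ℝ (Fin n)) : ℝ :=
  sInf {v : ℝ | ∃ (L : ℝ) (γ : ℝ → EuclideanSpace ℝ (Fin n)), 0 ≤ L ∧
    LipschitzWith 1 γ ∧ γ 0 = x ∧ γ L = y ∧ (∀ t ∈ Set.Icc (0:ℝ) L, γ t ∈ G) ∧
    v = ∫ t in (0:ℝ)..L, 1 / Metric.infDist (γ t) (frontier G)}

/-- `G` satisfies a `β`-quasihyperbolic boundary condition with base point `x₀` and
constant `c`: `k_G(x, x₀) ≤ (1/β) log(1/dist(x, ∂G)) + c` for all `x ∈ G`. -/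
def QHBCWith {n : ℕ} (G : Set (EuclideanSpace ℝ (Fin n))) (β : ℝ)
    (x₀ : EuclideanSpace ℝ (Fin n)) (c : ℝ) : Prop :=
  ∀ x ∈ G, qhDist G x x₀ ≤ (1 / β) * Real.log (1 / Metric.infDist x (frontier G)) + c

/-- `G` satisfies a `β`-quasihyperbolic boundary condition. -/
def QHBC {n : ℕ} (G : Set (EuclideanSpace ℝ (Fin n))) (β : ℝ) : Prop :=
  ∃ x₀ ∈ G, ∃ c : ℝ, QHBCWith G β x₀ c

/-- `G` supports the `(q,p)`-Poincaré inequality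
`(∫_G |u - u_G|^q)^{1/q} ≤ c (∫_G |∇u|^p)^{1/p}` for Sobolev functions on `G`. -/
def SupportsPoincare {n : ℕ} (G : Set (EuclideanSpace ℝ (Fin n))) (q p : ℝ) : Prop :=
  ∃ c : ℝ, ∀ u : EuclideanSpace ℝ (Fin n) → ℝ,
    DifferentiableOn ℝ u G → IntegrableOn u G volume →
    IntegrableOn (fun x => ‖fderivWithin ℝ u G x‖ ^ p) G volume →
    (∫ x in G, |u x - (∫ y in G, u y) / (volume G).toReal| ^ q) ^ (1 / q)
      ≤ c * (∫ x in G, ‖fderivWithin ℝ u G x‖ ^ p) ^ (1 / p)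

/-!
A near-geodesic from `x` to the base point is covered by a chain of Whitney balls
`B(z_k, δ(z_k) / 4)`, `δ` being the distance to the boundary. The boundary condition makes the
remaining length of the curve decay exponentially in the quasihyperbolic parameter, so that
`|x - z_k| ≲ δ(z_k) ^ β`, while the chain has at most `≲ 1 + |log δ(x)|` members. Telescoping along
chains, the local Poincaré inequality on balls and the scaling `p = n - nβ` give a
`(p, p)`-inequality with the weight `(1 + |log δ|) ^ (1 - p)`: the points `x` whose chain meets a
ball near `w` all lie in a ball of radius `≲ δ(w) ^ β`, whose volume is `≲ δ(w) ^ (n - p)`. The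
boundary condition also makes the boundary mean porous, so that every power of `1 + |log δ|` is
integrable over `G`. Since `q < p`, Hölder's inequality then removes the weight.
-/

section BoundaryDistance

/-- The distance from a point to the boundary of `G`. -/
noncomputable abbrev boundaryDist {X : Type*} [PseudoMetricSpace X] (G : Set X) (x : X) : ℝ :=
  Metric.infDist x (frontier G)

lemma boundaryDist_pos {X : Type*} [PseudoMetricSpace X] {G : Set X} {x : X} (hGo : IsOpen G)
    (hf : (frontier G).Nonempty) (hx : x ∈ G) : 0 < boundaryDist G x :=
  (isClosed_frontier.notMem_iff_infDist_pos hf).1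
    ((disjoint_frontier_iff_isOpen.2 hGo).symm.notMem_of_mem_left hx)

lemma exists_boundaryDist_le {X : Type*} [PseudoMetricSpace X] {G : Set X}
    (hGb : Bornology.IsBounded G) (hf : (frontier G).Nonempty) :
    ∃ D > 0, ∀ x ∈ G, boundaryDist G x ≤ D := by
  obtain ⟨y, hy⟩ := hf
  obtain ⟨D, hD, hGD⟩ := hGb.subset_closedBall_lt 0 y
  exact ⟨D, hD, fun x hx => (Metric.infDist_le_dist_of_mem hy).trans (hGD hx)⟩

variable {E : Type*} [NormedAddCommGroup E] [NormedSpace ℝ E] {G : Set E}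

lemma frontier_nonempty_of_isBounded [Nontrivial E] (hne : G.Nonempty)
    (hGb : Bornology.IsBounded G) : (frontier G).Nonempty :=
  nonempty_frontier_iff.2 ⟨hne, fun h => NormedSpace.unbounded_univ ℝ E (h ▸ hGb)⟩

lemma ball_boundaryDist_subset {x : E} (hGo : IsOpen G) (hx : x ∈ G) :
    Metric.ball x (boundaryDist G x) ⊆ G := by
  rcases le_or_gt (boundaryDist G x) 0 with hδ | hδ
  · simp only [Metric.ball_eq_empty.2 hδ, Set.empty_subset]
  · refine (convex_ball x _).isPreconnected.subset_of_closure_inter_subset hGo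
      ⟨x, Metric.mem_ball_self hδ, hx⟩ ?_
    rintro y ⟨hyG, hyx⟩
    rw [closure_eq_self_union_frontier] at hyG
    exact hyG.resolve_right (Metric.disjoint_ball_infDist.notMem_of_mem_left hyx)

end BoundaryDistance

section QuasihyperbolicLength

lemma lipschitzWith_ite_le {X : Type*} [PseudoMetricSpace X] {K : NNReal} {γ₁ γ₂ : ℝ → X} {c : ℝ}
    (h₁ : LipschitzWith K γ₁) (h₂ : LipschitzWith K γ₂) (hc : γ₁ c = γ₂ c) :
    LipschitzWith K fun t => if t ≤ c then γ₁ t else γ₂ t := by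
  refine LipschitzWith.of_dist_le_mul fun s t => ?_
  wlog hst : s ≤ t generalizing s t
  · rw [dist_comm, dist_comm s]
    exact this t s (le_of_not_ge hst)
  by_cases ht : t ≤ c
  · simpa only [if_pos ht, if_pos (hst.trans ht)] using h₁.dist_le_mul s t
  by_cases hs : s ≤ c
  · simp only [if_pos hs, if_neg ht]
    calc dist (γ₁ s) (γ₂ t) ≤ dist (γ₁ s) (γ₁ c) + dist (γ₂ c) (γ₂ t) := by
          simpa only [hc] using dist_triangle (γ₁ s) (γ₁ c) (γ₂ t)
      _ ≤ K * dist s c + K * dist c t := add_le_add (h₁.dist_le_mul s c) (h₂.dist_le_mul c t)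
      _ = K * dist s t := by
          rw [← mul_add, Real.dist_eq, Real.dist_eq, Real.dist_eq, abs_of_nonpos (by linarith),
            abs_of_neg (by linarith), abs_of_nonpos (by linarith)]
          ring
  · simpa only [if_neg ht, if_neg hs] using h₂.dist_le_mul s t

section
variable {X : Type*} [PseudoMetricSpace X] {G : Set X}

/-- `x` and `y` are joined by a rectifiable curve in `G` of quasihyperbolic length `v`. The curve
is a `1`-Lipschitz map on `[0, L]`, as in `qhDist`. -/
def QHJoined (G : Set X) (x y : X) (v : ℝ) : Prop :=
  ∃ (L : ℝ) (γ : ℝ → X), 0 ≤ L ∧ LipschitzWith 1 γ ∧ γ 0 = x ∧ γ L = y ∧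
    (∀ t ∈ Set.Icc (0 : ℝ) L, γ t ∈ G) ∧ v = ∫ t in (0 : ℝ)..L, 1 / boundaryDist G (γ t)

lemma intervalIntegrable_one_div_boundaryDist (hGo : IsOpen G) (hf : (frontier G).Nonempty)
    {γ : ℝ → X} (hγ : Continuous γ) {a b : ℝ} (hab : a ≤ b) (hG : ∀ t ∈ Set.Icc a b, γ t ∈ G) :
    IntervalIntegrable (fun t => 1 / boundaryDist G (γ t)) volume a b :=
  ContinuousOn.intervalIntegrable_of_Icc hab <| continuousOn_const.div
    ((Metric.continuous_infDist_pt _).comp hγ).continuousOn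
    fun t ht => (boundaryDist_pos hGo hf (hG t ht)).ne'

namespace QHJoined
variable {x y z : X} {v w : ℝ}

lemma nonneg (h : QHJoined G x y v) : 0 ≤ v := by
  obtain ⟨L, γ, hL, -, -, -, -, rfl⟩ := h
  exact intervalIntegral.integral_nonneg hL fun t _ => one_div_nonneg.2 Metric.infDist_nonneg

lemma symm (h : QHJoined G x y v) : QHJoined G y x v := by
  obtain ⟨L, γ, hL, hγ, rfl, rfl, hG, rfl⟩ := h
  refine ⟨L, fun t => γ (L - t), hL, ?_, by simp only [sub_zero], by simp only [sub_self], ?_, ?_⟩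
  · exact (hγ.comp (IsometryEquiv.subLeft L).isometry.lipschitz).weaken (mul_one _).le
  · exact fun t ht => hG _ ⟨by linarith [ht.2], by linarith [ht.1]⟩
  · rw [intervalIntegral.integral_comp_sub_left (fun t => 1 / boundaryDist G (γ t)) L,
      sub_self, sub_zero]

lemma of_lipschitzWith {γ : ℝ → X} (hγ : LipschitzWith 1 γ) {a b : ℝ} (hab : a ≤ b)
    (hG : ∀ t ∈ Set.Icc a b, γ t ∈ G) :
    QHJoined G (γ a) (γ b) (∫ t in a..b, 1 / boundaryDist G (γ t)) := by
  refine ⟨b - a, fun t => γ (t + a), sub_nonneg.2 hab, ?_, by simp only [zero_add],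
    by simp only [sub_add_cancel], ?_, ?_⟩
  · exact (hγ.comp (IsometryEquiv.addRight a).isometry.lipschitz).weaken (mul_one _).le
  · exact fun t ht => hG _ ⟨by linarith [ht.1], by linarith [ht.2]⟩
  · rw [intervalIntegral.integral_comp_add_right (fun t => 1 / boundaryDist G (γ t)) a,
      zero_add, sub_add_cancel]

lemma trans (hGo : IsOpen G) (hf : (frontier G).Nonempty) (h : QHJoined G x y v)
    (h' : QHJoined G y z w) : QHJoined G x z (v + w) := by
  obtain ⟨L, γ, hL, hγ, rfl, rfl, hG, rfl⟩ := h
  obtain ⟨L', γ', hL', hγ', hy, rfl, hG', rfl⟩ := h'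
  set Γ : ℝ → X := fun t => if t ≤ L then γ t else γ' (t - L)
  have eq_left : ∀ t ≤ L, Γ t = γ t := fun t ht => if_pos ht
  have eq_right : ∀ t, L ≤ t → Γ t = γ' (t - L) := fun t ht => by
    rcases ht.eq_or_lt with rfl | ht
    · rw [eq_left L le_rfl, sub_self, hy]
    · exact if_neg ht.not_ge
  have hΓ_lip : LipschitzWith 1 Γ := lipschitzWith_ite_le hγ
    ((hγ'.comp (IsometryEquiv.subRight L).isometry.lipschitz).weaken (mul_one _).le)
    (by rw [sub_self, hy])
  have hΓG : ∀ t ∈ Set.Icc (0 : ℝ) (L + L'), Γ t ∈ G := fun t ht => by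
    rcases le_total t L with htL | htL
    · exact eq_left t htL ▸ hG t ⟨ht.1, htL⟩
    · exact eq_right t htL ▸ hG' _ ⟨by linarith, by linarith [ht.2]⟩
  refine ⟨L + L', Γ, by positivity, hΓ_lip, eq_left 0 hL, ?_, hΓG, ?_⟩
  · rw [eq_right _ (by linarith), add_sub_cancel_left]
  · rw [← intervalIntegral.integral_add_adjacent_intervals (b := L)
      (intervalIntegrable_one_div_boundaryDist hGo hf hΓ_lip.continuous hL
        fun t ht => hΓG t ⟨ht.1, by linarith [ht.2]⟩)
      (intervalIntegrable_one_div_boundaryDist hGo hf hΓ_lip.continuous (by linarith)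
        fun t ht => hΓG t ⟨by linarith [ht.1], ht.2⟩)]
    have shift := intervalIntegral.integral_comp_sub_right (a := L) (b := L + L')
      (fun t => 1 / boundaryDist G (γ' t)) L
    rw [sub_self, add_sub_cancel_left] at shift
    rw [← shift]
    refine congrArg₂ (· + ·) (intervalIntegral.integral_congr fun t ht => ?_)
      (intervalIntegral.integral_congr fun t ht => ?_)
    · rw [Set.uIcc_of_le hL] at ht
      simp only [eq_left t ht.2]
    · rw [Set.uIcc_of_le (by linarith)] at ht
      simp only [eq_right t ht.1]

end QHJoined
end

variable {E : Type*} [NormedAddCommGroup E] [NormedSpace ℝ E] {G : Set E} {x y : E}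

lemma exists_lipschitzWith_segment (x y : E) :
    ∃ γ : ℝ → E, LipschitzWith 1 γ ∧ γ 0 = x ∧ γ (dist x y) = y := by
  rcases eq_or_ne x y with rfl | hxy
  · exact ⟨fun _ => x, LipschitzWith.const' x, rfl, rfl⟩
  · have hd : dist x y ≠ 0 := dist_ne_zero.2 hxy
    refine ⟨fun t => AffineMap.lineMap x y (t / dist x y), LipschitzWith.of_dist_le_mul fun s t =>
      le_of_eq ?_, ?_, ?_⟩
    · rw [dist_lineMap_lineMap, Real.dist_eq, ← sub_div, abs_div, abs_of_nonneg dist_nonneg,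
        div_mul_cancel₀ _ hd, NNReal.coe_one, one_mul, Real.dist_eq]
    · simp only [zero_div, AffineMap.lineMap_apply_zero]
    · simp only [div_self hd, AffineMap.lineMap_apply_one]

lemma exists_qhJoined_le_one (hGo : IsOpen G) (hf : (frontier G).Nonempty) (hx : x ∈ G)
    (hxy : dist x y ≤ boundaryDist G x / 2) : ∃ v ≤ 1, QHJoined G x y v := by
  have hδ := boundaryDist_pos hGo hf hx
  obtain ⟨γ, hγ, hγ₀, hγ₁⟩ := exists_lipschitzWith_segment x y
  have hdist : ∀ t ∈ Set.Icc 0 (dist x y), dist (γ t) x ≤ boundaryDist G x / 2 := fun t ht => by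
    have := hγ.dist_le_mul t 0
    rw [hγ₀, NNReal.coe_one, one_mul, Real.dist_0_eq_abs, abs_of_nonneg ht.1] at this
    linarith [ht.2]
  have hG : ∀ t ∈ Set.Icc 0 (dist x y), γ t ∈ G := fun t ht =>
    ball_boundaryDist_subset hGo hx (by rw [Metric.mem_ball]; linarith [hdist t ht])
  refine ⟨_, ?_, dist x y, γ, dist_nonneg, hγ, hγ₀, hγ₁, hG, rfl⟩
  calc ∫ t in (0 : ℝ)..dist x y, 1 / boundaryDist G (γ t)
      ≤ ∫ t in (0 : ℝ)..dist x y, 2 / boundaryDist G x := by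
        refine intervalIntegral.integral_mono_on dist_nonneg
          (intervalIntegrable_one_div_boundaryDist hGo hf hγ.continuous dist_nonneg hG)
          intervalIntegrable_const fun t ht => ?_
        have hle := Metric.infDist_le_infDist_add_dist (s := frontier G) (x := x) (y := γ t)
        rw [div_le_div_iff₀ (boundaryDist_pos hGo hf (hG t ht)) hδ]
        linarith [hdist t ht, dist_comm x (γ t)]
    _ = dist x y * 2 / boundaryDist G x := by
        rw [intervalIntegral.integral_const, sub_zero, smul_eq_mul, mul_div_assoc]
    _ ≤ 1 := (div_le_one hδ).2 (by linarith)

lemma exists_qhJoined (hGo : IsOpen G) (hf : (frontier G).Nonempty) (hGc : IsPreconnected G)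
    (hx : x ∈ G) (hy : y ∈ G) : ∃ v, QHJoined G x y v := by
  suffices hsub : G ⊆ {a | a ∈ G ∧ ∃ v, QHJoined G a y v} from (hsub hx).2
  refine hGc.subset_of_closure_inter_subset (Metric.isOpen_iff.2 ?_) ⟨y, hy, hy, ?_⟩ ?_
  · rintro a ⟨ha, v, hv⟩
    have hδ := boundaryDist_pos hGo hf ha
    refine ⟨boundaryDist G a / 2, half_pos hδ, fun b hb => ?_⟩
    obtain ⟨w, -, hw⟩ := exists_qhJoined_le_one hGo hf ha (Metric.mem_ball'.1 hb).le
    exact ⟨ball_boundaryDist_subset hGo ha (Metric.ball_subset_ball (by linarith) hb), w + v,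
      hw.symm.trans hGo hf hv⟩
  · obtain ⟨w, -, hw⟩ := exists_qhJoined_le_one hGo hf hy
      ((dist_self y).trans_le (half_pos (boundaryDist_pos hGo hf hy)).le)
    exact ⟨w, hw⟩
  · rintro a ⟨ha_closure, ha⟩
    obtain ⟨b, ⟨-, v, hv⟩, hab⟩ := Metric.mem_closure_iff.1 ha_closure (boundaryDist G a / 2)
      (half_pos (boundaryDist_pos hGo hf ha))
    obtain ⟨w, -, hw⟩ := exists_qhJoined_le_one hGo hf ha hab.le
    exact ⟨ha, w + v, hw.trans hGo hf hv⟩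

end QuasihyperbolicLength

section NearGeodesics

lemma QHJoined.exists_forall_mem {X : Type*} [PseudoMetricSpace X] {G : Set X} {x y : X} {v : ℝ}
    (h : QHJoined G x y v) : ∃ (L : ℝ) (γ : ℝ → X), 0 ≤ L ∧ LipschitzWith 1 γ ∧ γ 0 = x ∧ γ L = y ∧
      (∀ t, γ t ∈ G) ∧ v = ∫ t in (0 : ℝ)..L, 1 / boundaryDist G (γ t) := by
  obtain ⟨L, γ, hL, hγ, rfl, rfl, hG, rfl⟩ := h
  have clamp_of_mem : ∀ t ∈ Set.Icc 0 L, max 0 (min t L) = t := fun t ht => by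
    rw [min_eq_left ht.2, max_eq_right ht.1]
  refine ⟨L, fun t => γ (max 0 (min t L)), hL,
    (hγ.comp ((LipschitzWith.id.min_const L).const_max 0)).weaken (mul_one _).le, ?_, ?_,
    fun t => hG _ ⟨le_max_left _ _, max_le hL (min_le_right _ _)⟩, ?_⟩
  · simp only [clamp_of_mem 0 ⟨le_rfl, hL⟩]
  · simp only [clamp_of_mem L ⟨hL, le_rfl⟩]
  · refine intervalIntegral.integral_congr fun t ht => ?_
    rw [Set.uIcc_of_le hL] at ht
    simp only [clamp_of_mem t ht]

variable {n : ℕ} {G : Set (EuclideanSpace ℝ (Fin n))} {x y z : EuclideanSpace ℝ (Fin n)}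

lemma qhDist_le_of_qhJoined {v : ℝ} (h : QHJoined G x y v) : qhDist G x y ≤ v :=
  csInf_le ⟨0, fun _ hw => QHJoined.nonneg hw⟩ h

lemma exists_qhJoined_lt_qhDist_add (hGo : IsOpen G) (hf : (frontier G).Nonempty)
    (hGc : IsPreconnected G) (hx : x ∈ G) (hy : y ∈ G) {ε : ℝ} (hε : 0 < ε) :
    ∃ v < qhDist G x y + ε, QHJoined G x y v := by
  obtain ⟨v, hv, hlt⟩ := Real.lt_sInf_add_pos (s := {v | QHJoined G x y v})
    (exists_qhJoined hGo hf hGc hx hy) hε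
  exact ⟨v, hlt, hv⟩

lemma qhDist_le_add_of_qhJoined (hGo : IsOpen G) (hf : (frontier G).Nonempty)
    (hGc : IsPreconnected G) (hy : y ∈ G) (hz : z ∈ G) {v : ℝ} (h : QHJoined G x y v) :
    qhDist G x z ≤ v + qhDist G y z := by
  refine le_of_forall_pos_le_add fun ε hε => ?_
  obtain ⟨w, hlt, hw⟩ := exists_qhJoined_lt_qhDist_add hGo hf hGc hy hz hε
  linarith [qhDist_le_of_qhJoined (h.trans hGo hf hw)]

lemma abs_qhDist_sub_qhDist_le_one (hGo : IsOpen G) (hf : (frontier G).Nonempty)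
    (hGc : IsPreconnected G) (hx : x ∈ G) (hz : z ∈ G) (hxy : dist x y ≤ boundaryDist G x / 2) :
    |qhDist G x z - qhDist G y z| ≤ 1 := by
  have hy : y ∈ G := ball_boundaryDist_subset hGo hx
    (by rw [Metric.mem_ball']; linarith [boundaryDist_pos hGo hf hx])
  obtain ⟨v, hv₁, hv⟩ := exists_qhJoined_le_one hGo hf hx hxy
  rw [abs_le]
  constructor <;> linarith [qhDist_le_add_of_qhJoined hGo hf hGc hy hz hv,
    qhDist_le_add_of_qhJoined hGo hf hGc hx hz hv.symm]

/-- `γ` restricted to `[0, L]` is a `1`-Lipschitz curve from `x` to `x₀` in `G` such that, at each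
of its points, the quasihyperbolic length still to be travelled agrees with the quasihyperbolic
distance to `x₀` up to an error `1`. Outside `[0, L]` the curve is only required to stay in `G`. -/
structure IsNearGeodesic (G : Set (EuclideanSpace ℝ (Fin n))) (x x₀ : EuclideanSpace ℝ (Fin n))
    (L : ℝ) (γ : ℝ → EuclideanSpace ℝ (Fin n)) : Prop where
  nonneg : 0 ≤ L
  lipschitz : LipschitzWith 1 γ
  source : γ 0 = x
  target : γ L = x₀
  mem : ∀ t, γ t ∈ G
  qhDist_le : ∀ s ∈ Set.Icc 0 L, qhDist G (γ s) x₀ ≤ ∫ t in s..L, 1 / boundaryDist G (γ t)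
  integral_le : ∀ s ∈ Set.Icc 0 L, ∫ t in s..L, 1 / boundaryDist G (γ t) ≤ qhDist G (γ s) x₀ + 1

lemma exists_isNearGeodesic (hGo : IsOpen G) (hf : (frontier G).Nonempty)
    (hGc : IsPreconnected G) (hx : x ∈ G) (hz : z ∈ G) : ∃ L γ, IsNearGeodesic G x z L γ := by
  obtain ⟨v, hlt, hv⟩ := exists_qhJoined_lt_qhDist_add hGo hf hGc hx hz one_pos
  obtain ⟨L, γ, hL, hγ, rfl, rfl, hG, rfl⟩ := hv.exists_forall_mem
  refine ⟨L, γ, hL, hγ, rfl, rfl, hG, fun s hs => ?_, fun s hs => ?_⟩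
  · exact qhDist_le_of_qhJoined (.of_lipschitzWith hγ hs.2 fun t _ => hG t)
  · have h_tri := qhDist_le_add_of_qhJoined hGo hf hGc (hG s) hz
      (.of_lipschitzWith hγ hs.1 fun t _ => hG t)
    have h_split := intervalIntegral.integral_add_adjacent_intervals
      (intervalIntegrable_one_div_boundaryDist hGo hf hγ.continuous hs.1 fun t _ => hG t)
      (intervalIntegrable_one_div_boundaryDist hGo hf hγ.continuous hs.2 fun t _ => hG t)
    linarith

end NearGeodesics

section QuasihyperbolicTail

/-- The integral `∫_s^L dt / f(t)`. When `f` is the boundary distance along a curve, this is the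
quasihyperbolic length of the part of the curve between the parameters `s` and `L`. -/
noncomputable def qhTail (f : ℝ → ℝ) (L s : ℝ) : ℝ :=
  ∫ t in s..L, 1 / f t

variable {f : ℝ → ℝ} {L : ℝ}

lemma intervalIntegrable_one_div (hpos : ∀ t, 0 < f t) (hf : Continuous f) (a b : ℝ) :
    IntervalIntegrable (fun t => 1 / f t) volume a b :=
  (continuous_const.div hf fun t => (hpos t).ne').intervalIntegrable a b

lemma integral_one_div_eq_qhTail_sub (hpos : ∀ t, 0 < f t) (hf : Continuous f) (a b : ℝ) :
    ∫ t in a..b, 1 / f t = qhTail f L a - qhTail f L b :=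
  eq_sub_of_add_eq (intervalIntegral.integral_add_adjacent_intervals
    (intervalIntegrable_one_div hpos hf a b) (intervalIntegrable_one_div hpos hf b L))

lemma qhTail_self : qhTail f L L = 0 :=
  intervalIntegral.integral_same

lemma hasDerivAt_qhTail (hpos : ∀ t, 0 < f t) (hf : Continuous f) (s : ℝ) :
    HasDerivAt (qhTail f L) (-(1 / f s)) s := by
  have hc : Continuous fun t => 1 / f t := continuous_const.div hf fun t => (hpos t).ne'
  exact intervalIntegral.integral_hasDerivAt_left (hc.intervalIntegrable s L)
    (hc.stronglyMeasurableAtFilter volume _) hc.continuousAt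

lemma strictAnti_qhTail (hpos : ∀ t, 0 < f t) (hf : Continuous f) : StrictAnti (qhTail f L) :=
  strictAnti_of_deriv_neg fun s => by
    rw [(hasDerivAt_qhTail hpos hf s).deriv]
    exact neg_neg_of_pos (one_div_pos.2 (hpos s))

lemma exists_qhTail_eq (hpos : ∀ t, 0 < f t) (hf : Continuous f) (hL : 0 ≤ L) {v : ℝ}
    (hv : v ∈ Set.Icc 0 (qhTail f L 0)) : ∃ s ∈ Set.Icc 0 L, qhTail f L s = v :=
  intermediate_value_Icc' hL
    (fun s _ => (hasDerivAt_qhTail hpos hf s).continuousAt.continuousWithinAt)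
    (qhTail_self (f := f) (L := L) ▸ hv)

lemma le_add_abs_sub_of_lipschitzWith_one (hf : LipschitzWith 1 f) (s t : ℝ) :
    f s ≤ f t + |s - t| := by
  simpa only [NNReal.coe_one, one_mul, Real.dist_eq] using hf.le_add_mul s t

/- The function `t ↦ f a + (t - a)` grows as fast as a `1`-Lipschitz function can, and its
reciprocal integrates to a logarithm. -/
lemma add_sub_le_mul_exp_qhTail_sub (hpos : ∀ t, 0 < f t) (hf : LipschitzWith 1 f) {a b : ℝ}
    (hab : a ≤ b) : f a + (b - a) ≤ f a * Real.exp (qhTail f L a - qhTail f L b) := by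
  have hfa := hpos a
  have h_log : ∫ t in a..b, 1 / (t + (f a - a)) = Real.log ((f a + (b - a)) / f a) := by
    rw [intervalIntegral.integral_comp_add_right (fun t => 1 / t) (f a - a),
      integral_one_div_of_pos (by linarith) (by linarith)]
    congr 2 <;> ring
  have h_le : Real.log ((f a + (b - a)) / f a) ≤ qhTail f L a - qhTail f L b := by
    rw [← integral_one_div_eq_qhTail_sub hpos hf.continuous, ← h_log]
    refine intervalIntegral.integral_mono_on hab ?_
      (intervalIntegrable_one_div hpos hf.continuous a b) fun t ht => ?_
    · exact ContinuousOn.intervalIntegrable_of_Icc hab <| continuousOn_const.div (by fun_prop)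
        fun t ht => ne_of_gt (by linarith [ht.1])
    · have := le_add_abs_sub_of_lipschitzWith_one hf t a
      rw [abs_of_nonneg (sub_nonneg.2 ht.1)] at this
      exact one_div_le_one_div_of_le (hpos t) (by linarith)
  rw [Real.log_le_iff_le_exp (div_pos (by linarith) hfa), div_le_iff₀ hfa] at h_le
  linarith

/- Since `f s ≤ C exp (-β τ s)`, the derivative of `s ↦ (C / β) exp (-β τ s)`, where
`τ = qhTail f L`, is at least `1`. -/
lemma le_mul_exp_neg_mul_qhTail (hpos : ∀ t, 0 < f t) (hf : Continuous f) {C β : ℝ}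
    (hβ : 0 < β) (hC : 0 < C)
    (h_decay : ∀ s ∈ Set.Icc 0 L, f s ≤ C * Real.exp (-β * qhTail f L s)) :
    ∀ s ∈ Set.Icc 0 L, s ≤ C / β * Real.exp (-β * qhTail f L s) := by
  intro s hs
  set g : ℝ → ℝ := fun s => C / β * Real.exp (-β * qhTail f L s) - s with hg
  have hg' : ∀ s, HasDerivAt g (C * Real.exp (-β * qhTail f L s) / f s - 1) s := fun s => by
    refine HasDerivAt.sub ?_ (hasDerivAt_id s)
    refine ((((hasDerivAt_qhTail hpos hf s).const_mul (-β)).exp).const_mul (C / β)).congr_deriv ?_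
    have := (hpos s).ne'
    field_simp
  have hg_mono : MonotoneOn g (Set.Icc 0 L) := by
    refine monotoneOn_of_deriv_nonneg (convex_Icc 0 L)
      (fun s _ => (hg' s).continuousAt.continuousWithinAt)
      (fun s _ => (hg' s).differentiableAt.differentiableWithinAt) fun s hs => ?_
    rw [(hg' s).deriv, sub_nonneg, one_le_div (hpos s)]
    exact h_decay s (interior_subset hs)
  have h_zero_le : g 0 ≤ g s := hg_mono ⟨le_rfl, hs.1.trans hs.2⟩ hs hs.1
  have h_zero : 0 < C / β * Real.exp (-β * qhTail f L 0) := by positivity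
  simp only [hg] at h_zero_le
  linarith

/-- The parameters `s k` cut the curve into pieces of quasihyperbolic length `1 / 10`, with
`s k = L` as soon as the curve is used up. -/
def IsTenthSubdivision (f : ℝ → ℝ) (L : ℝ) (s : ℕ → ℝ) : Prop :=
  ∀ k : ℕ, s k ∈ Set.Icc 0 L ∧ qhTail f L (s k) = max (qhTail f L 0 - k / 10) 0

lemma exists_isTenthSubdivision (hpos : ∀ t, 0 < f t) (hf : Continuous f) (hL : 0 ≤ L) :
    ∃ s, IsTenthSubdivision f L s := by
  refine Classical.skolem.1 fun k => exists_qhTail_eq hpos hf hL ⟨le_max_right _ _, ?_⟩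
  have hV := (strictAnti_qhTail (L := L) hpos hf).antitone hL
  rw [qhTail_self] at hV
  exact max_le (sub_le_self _ (by positivity)) hV

namespace IsTenthSubdivision
variable {s : ℕ → ℝ}

lemma apply_zero (hs : IsTenthSubdivision f L s) (hpos : ∀ t, 0 < f t) (hf : Continuous f) :
    s 0 = 0 := by
  refine le_antisymm ((strictAnti_qhTail (L := L) hpos hf).le_iff_ge.1 ?_) (hs 0).1.1
  rw [(hs 0).2, Nat.cast_zero, zero_div, sub_zero]
  exact le_max_left _ _

lemma apply_of_le (hs : IsTenthSubdivision f L s) (hpos : ∀ t, 0 < f t) (hf : Continuous f)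
    {k : ℕ} (hk : qhTail f L 0 * 10 ≤ k) : s k = L := by
  refine (strictAnti_qhTail (L := L) hpos hf).injective ?_
  rw [(hs k).2, qhTail_self]
  exact max_eq_right (by linarith)

lemma apply_succ_sub_le (hs : IsTenthSubdivision f L s) (hpos : ∀ t, 0 < f t)
    (hf : LipschitzWith 1 f) (k : ℕ) : |s (k + 1) - s k| ≤ f (s k) / 8 := by
  have h_le : s k ≤ s (k + 1) := by
    rw [← (strictAnti_qhTail (L := L) hpos hf.continuous).le_iff_ge, (hs k).2, (hs (k + 1)).2]
    push_cast
    exact max_le_max_right 0 (by linarith)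
  have h_step : qhTail f L (s k) - qhTail f L (s (k + 1)) ≤ 1 / 10 := by
    rw [(hs k).2, (hs (k + 1)).2, sub_le_iff_le_add]
    push_cast
    refine max_le ?_ (by positivity)
    linarith [le_max_left (qhTail f L 0 - ((k : ℝ) + 1) / 10) 0]
  have h_exp : Real.exp (1 / 10) ≤ 9 / 8 :=
    (Real.exp_bound_div_one_sub_of_interval (by norm_num) (by norm_num)).trans (by norm_num)
  have h_growth := add_sub_le_mul_exp_qhTail_sub (L := L) hpos hf h_le
  have h_mul := mul_le_mul_of_nonneg_left ((Real.exp_le_exp.2 h_step).trans h_exp) (hpos (s k)).le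
  rw [abs_of_nonneg (sub_nonneg.2 h_le)]
  linarith

end IsTenthSubdivision

lemma two_div_le_qhTail_sub (hpos : ∀ t, 0 < f t) (hf : Continuous f) {β r : ℝ} (hβ : 0 < β)
    (hr : 0 < r) (hfr : ∀ s ∈ Set.Icc (r / 2) r, f s ≤ β / 4 * r) :
    2 / β ≤ qhTail f L (r / 2) - qhTail f L r := by
  calc 2 / β = ∫ _ in r / 2..r, 1 / (β / 4 * r) := by
        rw [intervalIntegral.integral_const, smul_eq_mul]
        field_simp
        norm_num
    _ ≤ ∫ t in r / 2..r, 1 / f t :=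
        intervalIntegral.integral_mono_on (by linarith) intervalIntegrable_const
          (intervalIntegrable_one_div hpos hf _ _)
          fun t ht => one_div_le_one_div_of_le (hpos t) (hfr t ht)
    _ = qhTail f L (r / 2) - qhTail f L r := integral_one_div_eq_qhTail_sub hpos hf _ _

lemma card_mul_two_div_le_qhTail (hpos : ∀ t, 0 < f t) (hf : Continuous f) {β : ℝ} (hβ : 0 < β)
    {j₀ J : ℕ} (hJ : j₀ ≤ J) (hL : (1 / 2 : ℝ) ^ j₀ ≤ L) {B : Finset ℕ}
    (hBJ : B ⊆ Finset.Ico j₀ J)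
    (hB : ∀ i ∈ B, ∀ s ∈ Set.Icc ((1 / 2 : ℝ) ^ i / 2) ((1 / 2) ^ i), f s ≤ β / 4 * (1 / 2) ^ i) :
    B.card * (2 / β) ≤ qhTail f L ((1 / 2) ^ J) := by
  set τ : ℕ → ℝ := fun i => qhTail f L ((1 / 2) ^ i) with hτ
  have hτ_succ : ∀ i, τ (i + 1) = qhTail f L ((1 / 2) ^ i / 2) := fun i => by
    simp only [hτ, pow_succ, mul_one_div]
  have hτ_anti := (strictAnti_qhTail (L := L) hpos hf).antitone
  calc B.card * (2 / β) = ∑ i ∈ B, 2 / β := by rw [Finset.sum_const, nsmul_eq_mul]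
    _ ≤ ∑ i ∈ B, (τ (i + 1) - τ i) := Finset.sum_le_sum fun i hi =>
        hτ_succ i ▸ two_div_le_qhTail_sub hpos hf hβ (by positivity) (hB i hi)
    _ ≤ ∑ i ∈ Finset.Ico j₀ J, (τ (i + 1) - τ i) :=
        Finset.sum_le_sum_of_subset_of_nonneg hBJ fun i _ _ => sub_nonneg.2 <| hτ_anti <|
          pow_le_pow_of_le_one (by norm_num) (by norm_num) i.le_succ
    _ = τ J - τ j₀ := Finset.sum_Ico_sub τ hJ
    _ ≤ τ J := sub_le_self _ (qhTail_self (f := f) (L := L) ▸ hτ_anti hL)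

end QuasihyperbolicTail

section WhitneyChains
variable {n : ℕ} {G : Set (EuclideanSpace ℝ (Fin n))} {x x₀ : EuclideanSpace ℝ (Fin n)}

namespace IsNearGeodesic
variable {L β c : ℝ} {γ : ℝ → EuclideanSpace ℝ (Fin n)}

lemma lipschitzWith_boundaryDist (hγ : IsNearGeodesic G x x₀ L γ) :
    LipschitzWith 1 fun t => boundaryDist G (γ t) :=
  ((Metric.lipschitz_infDist_pt (frontier G)).comp hγ.lipschitz).weaken (mul_one _).le

lemma boundaryDist_pos (hγ : IsNearGeodesic G x x₀ L γ) (hGo : IsOpen G)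
    (hf : (frontier G).Nonempty) (t : ℝ) : 0 < boundaryDist G (γ t) :=
  _root_.boundaryDist_pos hGo hf (hγ.mem t)

lemma dist_source_le (hγ : IsNearGeodesic G x x₀ L γ) {s : ℝ} (hs : 0 ≤ s) :
    dist x (γ s) ≤ s := by
  simpa only [hγ.source, NNReal.coe_one, one_mul, Real.dist_0_eq_abs, abs_of_nonneg hs, dist_comm]
    using hγ.lipschitz.dist_le_mul s 0

lemma le_mul_exp_neg_mul_qhTail (hγ : IsNearGeodesic G x x₀ L γ) (hGo : IsOpen G)
    (hf : (frontier G).Nonempty) (hβ : 0 < β) (hQ : QHBCWith G β x₀ c) :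
    ∀ s ∈ Set.Icc 0 L, s ≤ Real.exp (β * (c + 1)) / β *
      Real.exp (-β * qhTail (fun t => boundaryDist G (γ t)) L s) := by
  refine _root_.le_mul_exp_neg_mul_qhTail (hγ.boundaryDist_pos hGo hf)
    hγ.lipschitzWith_boundaryDist.continuous hβ (Real.exp_pos _) fun s hs => ?_
  have h_tail := (hγ.integral_le s hs).trans (add_le_add_left (hQ (γ s) (hγ.mem s)) 1)
  rw [one_div (Metric.infDist _ _), Real.log_inv, add_assoc] at h_tail
  have h_mul := mul_le_mul_of_nonneg_left h_tail hβ.le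
  rw [mul_add, ← mul_assoc, mul_one_div_cancel hβ.ne', one_mul] at h_mul
  rw [← Real.exp_add, ← Real.log_le_iff_le_exp (hγ.boundaryDist_pos hGo hf s)]
  simp only [qhTail]
  linarith

lemma dist_le_rpow_boundaryDist (hγ : IsNearGeodesic G x x₀ L γ) (hGo : IsOpen G)
    (hf : (frontier G).Nonempty) (hβ : 0 < β) (hQ : QHBCWith G β x₀ c) :
    ∀ s ∈ Set.Icc 0 L, dist x (γ s) ≤ Real.exp (β * (c + 1)) / β / boundaryDist G x₀ ^ β *
      boundaryDist G (γ s) ^ β := by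
  intro s hs
  have hδ := hγ.boundaryDist_pos hGo hf
  set f : ℝ → ℝ := fun t => boundaryDist G (γ t)
  have hδ₀ : 0 < boundaryDist G x₀ := hγ.target ▸ hδ L
  have h_exp : Real.exp (-qhTail f L s) ≤ f s / boundaryDist G x₀ := by
    have h_growth := add_sub_le_mul_exp_qhTail_sub (L := L) hδ hγ.lipschitzWith_boundaryDist hs.2
    have h_lip := le_add_abs_sub_of_lipschitzWith_one hγ.lipschitzWith_boundaryDist L s
    rw [abs_of_nonneg (sub_nonneg.2 hs.2), hγ.target] at h_lip
    rw [qhTail_self, sub_zero] at h_growth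
    rw [le_div_iff₀ hδ₀, Real.exp_neg, inv_mul_le_iff₀ (Real.exp_pos _)]
    linarith
  calc dist x (γ s) ≤ s := hγ.dist_source_le hs.1
    _ ≤ Real.exp (β * (c + 1)) / β * Real.exp (-β * qhTail f L s) :=
        hγ.le_mul_exp_neg_mul_qhTail hGo hf hβ hQ s hs
    _ = Real.exp (β * (c + 1)) / β * Real.exp (-qhTail f L s) ^ β := by
        rw [← Real.exp_mul, neg_mul, neg_mul, mul_comm (qhTail f L s)]
    _ ≤ Real.exp (β * (c + 1)) / β * (f s / boundaryDist G x₀) ^ β := by gcongr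
    _ = Real.exp (β * (c + 1)) / β / boundaryDist G x₀ ^ β * f s ^ β := by
        rw [Real.div_rpow (hδ s).le hδ₀.le]
        ring

lemma qhTail_zero_le (hγ : IsNearGeodesic G x x₀ L γ) (hβ : 0 < β) (hQ : QHBCWith G β x₀ c) :
    qhTail (fun t => boundaryDist G (γ t)) L 0 ≤
      1 / β * |Real.log (boundaryDist G x)| + |c| + 1 := by
  have h_tail := hγ.integral_le 0 ⟨le_rfl, hγ.nonneg⟩
  have h_dist := hQ (γ 0) (hγ.mem 0)
  rw [one_div (Metric.infDist _ _), Real.log_inv, hγ.source] at h_dist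
  rw [hγ.source] at h_tail
  have h_abs : 1 / β * -Real.log (boundaryDist G x) ≤ 1 / β * |Real.log (boundaryDist G x)| :=
    mul_le_mul_of_nonneg_left (neg_le_abs _) (one_div_nonneg.2 hβ.le)
  exact h_tail.trans (add_le_add_left (h_dist.trans (add_le_add h_abs (le_abs_self c))) 1)

lemma floor_qhTail_zero_le (hγ : IsNearGeodesic G x x₀ L γ) (hβ : 0 < β)
    (hQ : QHBCWith G β x₀ c) (hV : 0 ≤ qhTail (fun t => boundaryDist G (γ t)) L 0) :
    ((⌊qhTail (fun t => boundaryDist G (γ t)) L 0 * 10⌋₊ + 1 : ℕ) : ℝ) ≤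
      (10 / β + 10 * |c| + 11) * (1 + |Real.log (boundaryDist G x)|) := by
  set V := qhTail (fun t => boundaryDist G (γ t)) L 0
  set l := |Real.log (boundaryDist G x)|
  calc ((⌊V * 10⌋₊ + 1 : ℕ) : ℝ) ≤ V * 10 + 1 := by
        push_cast
        gcongr
        exact Nat.floor_le (by positivity)
    _ ≤ (1 / β * l + |c| + 1) * 10 + 1 := by
        gcongr
        exact hγ.qhTail_zero_le hβ hQ
    _ ≤ (1 / β * l + |c| + 1) * 10 + 1 + (10 / β + (10 * |c| + 11) * l) :=
        le_add_of_nonneg_right (by positivity)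
    _ = (10 / β + 10 * |c| + 11) * (1 + l) := by ring

end IsNearGeodesic

lemma card_le_succ_of_forall_le_add {S : Finset ℕ} {m : ℕ} (hS : ∀ a ∈ S, ∀ b ∈ S, b ≤ a + m) :
    S.card ≤ m + 1 := by
  rcases S.eq_empty_or_nonempty with rfl | hne
  · exact Nat.zero_le _
  · calc S.card ≤ (Finset.Icc (S.min' hne) (S.min' hne + m)).card :=
          Finset.card_le_card fun a ha => Finset.mem_Icc.2
            ⟨S.min'_le a ha, hS _ (S.min'_mem hne) a ha⟩
      _ = m + 1 := by rw [Nat.card_Icc]; omega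

/-- The points `z 0 = x, …, z N = x₀` are the centers of a chain of Whitney balls
`B(z k, δ(z k) / 2)`, where `δ` is the boundary distance. The chain is short, it stays within
`C δ(z k) ^ β` of `x`, and its balls have bounded overlap. The values of `z` beyond `N` are only
required to lie in `G` and to satisfy the distance bound. -/
structure IsWhitneyChain {X : Type*} [PseudoMetricSpace X] (G : Set X) (β C : ℝ) (x x₀ : X)
    (N : ℕ) (z : ℕ → X) : Prop where
  length_pos : 0 < N
  source : z 0 = x
  target : z N = x₀
  mem : ∀ k, z k ∈ G
  dist_succ_le : ∀ k < N, dist (z k) (z (k + 1)) ≤ boundaryDist G (z k) / 8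
  length_le : N ≤ C * (1 + |Real.log (boundaryDist G x)|)
  dist_le : ∀ k, dist x (z k) ≤ C * boundaryDist G (z k) ^ β
  card_le : ∀ w, ∀ S : Finset ℕ,
    (∀ k ∈ S, k < N ∧ dist w (z k) < boundaryDist G (z k) / 2) → S.card ≤ 31

/- A point of the `k`-th ball lies within quasihyperbolic distance `1` of its center, whose
distance to `x₀` is `V - k / 10` up to an error `1`, where `V` is the length of the curve. -/
lemma IsTenthSubdivision.card_le {L : ℝ} {γ : ℝ → EuclideanSpace ℝ (Fin n)} {s : ℕ → ℝ}
    (hs : IsTenthSubdivision (fun t => boundaryDist G (γ t)) L s)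
    (hγ : IsNearGeodesic G x x₀ L γ) (hGo : IsOpen G) (hf : (frontier G).Nonempty)
    (hGc : IsPreconnected G) (w : EuclideanSpace ℝ (Fin n)) {S : Finset ℕ}
    (hS : ∀ k ∈ S, k ≤ qhTail (fun t => boundaryDist G (γ t)) L 0 * 10 ∧
      dist w (γ (s k)) < boundaryDist G (γ (s k)) / 2) : S.card ≤ 31 := by
  set V := qhTail (fun t => boundaryDist G (γ t)) L 0
  have h_near : ∀ k ∈ S, qhDist G w x₀ - 1 ≤ V - k / 10 ∧ V - k / 10 ≤ qhDist G w x₀ + 2 := by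
    intro k hk
    have h_tail : ∫ t in s k..L, 1 / boundaryDist G (γ t) = V - k / 10 :=
      (hs k).2.trans (max_eq_left (by linarith [(hS k hk).1]))
    have h_lower := hγ.qhDist_le (s k) (hs k).1
    have h_upper := hγ.integral_le (s k) (hs k).1
    have h_local := abs_le.1 <| abs_qhDist_sub_qhDist_le_one hGo hf hGc (hγ.mem (s k))
      (hγ.target ▸ hγ.mem L) (dist_comm w _ ▸ (hS k hk).2.le)
    constructor <;> linarith [h_local.1, h_local.2]
  refine card_le_succ_of_forall_le_add (m := 30) fun a ha b hb => ?_
  exact_mod_cast (by linarith [h_near a ha, h_near b hb] : (b : ℝ) ≤ a + 30)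

lemma IsNearGeodesic.exists_isWhitneyChain {L β c : ℝ} {γ : ℝ → EuclideanSpace ℝ (Fin n)}
    (hγ : IsNearGeodesic G x x₀ L γ) (hGo : IsOpen G) (hf : (frontier G).Nonempty)
    (hGc : IsPreconnected G) (hβ : 0 < β) (hQ : QHBCWith G β x₀ c) :
    ∃ N z, IsWhitneyChain G β (max (Real.exp (β * (c + 1)) / β / boundaryDist G x₀ ^ β)
      (10 / β + 10 * |c| + 11)) x x₀ N z := by
  have hδ := hγ.boundaryDist_pos hGo hf
  have hlip := hγ.lipschitzWith_boundaryDist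
  set C := max (Real.exp (β * (c + 1)) / β / boundaryDist G x₀ ^ β) (10 / β + 10 * |c| + 11)
  set V := qhTail (fun t => boundaryDist G (γ t)) L 0
  have hV₀ : 0 ≤ V := by
    simpa only [qhTail_self]
      using (strictAnti_qhTail (L := L) hδ hlip.continuous).antitone hγ.nonneg
  obtain ⟨s, hs⟩ := exists_isTenthSubdivision hδ hlip.continuous hγ.nonneg
  refine ⟨⌊V * 10⌋₊ + 1, fun k => γ (s k), Nat.succ_pos _, ?_, ?_, fun k => hγ.mem _,
    fun k _ => ?_, ?_, fun k => ?_, fun w S hS => ?_⟩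
  · simp only [hs.apply_zero hδ hlip.continuous, hγ.source]
  · simp only [hs.apply_of_le hδ hlip.continuous (Nat.cast_succ (R := ℝ) _ ▸
      (Nat.lt_floor_add_one (V * 10)).le), hγ.target]
  · calc dist (γ (s k)) (γ (s (k + 1))) ≤ |s (k + 1) - s k| := by
          simpa only [NNReal.coe_one, one_mul, Real.dist_eq, abs_sub_comm]
            using hγ.lipschitz.dist_le_mul (s k) (s (k + 1))
      _ ≤ boundaryDist G (γ (s k)) / 8 := hs.apply_succ_sub_le hδ hlip k
  · exact (hγ.floor_qhTail_zero_le hβ hQ hV₀).trans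
      (mul_le_mul_of_nonneg_right (le_max_right _ _) (by positivity))
  · exact (hγ.dist_le_rpow_boundaryDist hGo hf hβ hQ (s k) (hs k).1).trans
      (mul_le_mul_of_nonneg_right (le_max_left _ _) (Real.rpow_nonneg (hδ _).le _))
  · exact hs.card_le hγ hGo hf hGc w fun k hk =>
      ⟨(Nat.le_floor_iff (by positivity)).1 (Nat.lt_succ_iff.1 (hS k hk).1), (hS k hk).2⟩

lemma QHBCWith.exists_forall_isWhitneyChain {β c : ℝ} (hQ : QHBCWith G β x₀ c) (hGo : IsOpen G)
    (hf : (frontier G).Nonempty) (hGc : IsPreconnected G) (hx₀ : x₀ ∈ G) (hβ : 0 < β) :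
    ∃ C > 0, ∀ x ∈ G, ∃ N z, IsWhitneyChain G β C x x₀ N z := by
  refine ⟨max (Real.exp (β * (c + 1)) / β / boundaryDist G x₀ ^ β) (10 / β + 10 * |c| + 11),
    by positivity, fun x hx => ?_⟩
  obtain ⟨L, γ, hγ⟩ := exists_isNearGeodesic hGo hf hGc hx hx₀
  exact hγ.exists_isWhitneyChain hGo hf hGc hβ hQ

end WhitneyChains

section MeanPorosity

/-- The points within `r * 2⁻ʲ` of some point of `G` whose distance to the boundary is comparable
to `2⁻ʲ`, namely between `κ * 2⁻ʲ` and `4 * 2⁻ʲ`: at the scale `2⁻ʲ` such a point sees a large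
hole of the boundary. -/
def holeNhd {X : Type*} [PseudoMetricSpace X] (G : Set X) (κ r : ℝ) (j : ℕ) : Set X :=
  {y | ∃ z ∈ G, κ * (1 / 2) ^ j < boundaryDist G z ∧ boundaryDist G z < 4 * (1 / 2) ^ j ∧
    dist y z < r * (1 / 2) ^ j}

/-- The number of dyadic scales `2⁻ʲ`, `j < J`, at which `y` lies near a hole of `∂G`. -/
noncomputable def holeCount {X : Type*} [PseudoMetricSpace X] (G : Set X) (κ r : ℝ) (J : ℕ)
    (y : X) : ℕ :=
  ∑ j ∈ Finset.range J, (holeNhd G κ r j).indicator (fun _ => 1) y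

/-- Mean porosity of the boundary in the sense of Koskela–Rohde, seen from inside `G`: up to the
scale of `x`, about half of all dyadic scales around `x` contain a hole of the boundary. -/
def IsMeanPorous {X : Type*} [PseudoMetricSpace X] (G : Set X) (κ C : ℝ) : Prop :=
  ∀ x ∈ G, ∀ J : ℕ, boundaryDist G x ≤ (1 / 2) ^ J → (J : ℝ) ≤ C + 2 * holeCount G κ 2 J x

lemma holeCount_eq_card {X : Type*} [PseudoMetricSpace X] (G : Set X) (κ r : ℝ) (J : ℕ) (y : X)
    [DecidablePred fun j => y ∈ holeNhd G κ r j] :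
    holeCount G κ r J y = ((Finset.range J).filter fun j => y ∈ holeNhd G κ r j).card := by
  classical
  simp only [holeCount, Set.indicator_apply, Finset.card_filter]

variable {n : ℕ} {G : Set (EuclideanSpace ℝ (Fin n))} {x x₀ : EuclideanSpace ℝ (Fin n)}
  {L β c : ℝ} {γ : ℝ → EuclideanSpace ℝ (Fin n)}

lemma IsNearGeodesic.boundaryDist_le_of_notMem_holeNhd (hγ : IsNearGeodesic G x x₀ L γ)
    {i J : ℕ} {κ : ℝ} (hiJ : i ≤ J) (hx : boundaryDist G x ≤ (1 / 2) ^ J)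
    (hi : x ∉ holeNhd G κ 2 i) {s : ℝ} (hs₀ : 0 ≤ s) (hs : s ≤ (1 / 2) ^ i) :
    boundaryDist G (γ s) ≤ κ * (1 / 2) ^ i := by
  by_contra! h_hole
  have h_dist : dist x (γ s) ≤ s := hγ.dist_source_le hs₀
  have h_lip : boundaryDist G (γ s) ≤ boundaryDist G x + dist (γ s) x :=
    Metric.infDist_le_infDist_add_dist
  have h_scale : (1 / 2 : ℝ) ^ J ≤ (1 / 2) ^ i :=
    pow_le_pow_of_le_one (by norm_num) (by norm_num) hiJ
  have h_pos : (0 : ℝ) < (1 / 2) ^ i := by positivity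
  rw [dist_comm] at h_lip
  exact hi ⟨γ s, hγ.mem s, h_hole, by linarith, by linarith⟩

lemma IsNearGeodesic.mul_qhTail_pow_le (hγ : IsNearGeodesic G x x₀ L γ) (hGo : IsOpen G)
    (hf : (frontier G).Nonempty) (hβ : 0 < β) (hQ : QHBCWith G β x₀ c) {J : ℕ}
    (hJ : (1 / 2 : ℝ) ^ J ≤ L) :
    β * qhTail (fun t => boundaryDist G (γ t)) L ((1 / 2) ^ J) ≤
      Real.log (Real.exp (β * (c + 1)) / β) + J * Real.log 2 := by
  have hA : 0 < Real.exp (β * (c + 1)) / β := by positivity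
  have h_log := Real.log_le_log (by positivity)
    (hγ.le_mul_exp_neg_mul_qhTail hGo hf hβ hQ _ ⟨by positivity, hJ⟩)
  rw [Real.log_mul hA.ne' (Real.exp_pos _).ne', Real.log_exp, Real.log_pow, one_div,
    Real.log_inv] at h_log
  simp only [one_div]
  linarith

lemma QHBCWith.exists_isMeanPorous (hQ : QHBCWith G β x₀ c) (hGo : IsOpen G)
    (hf : (frontier G).Nonempty) (hGc : IsPreconnected G) (hx₀ : x₀ ∈ G) (hβ : 0 < β) :
    ∃ C, IsMeanPorous G (β / 4) C := by
  classical
  have hδ₀ := boundaryDist_pos hGo hf hx₀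
  obtain ⟨j₀, hj₀⟩ := exists_pow_lt_of_lt_one (half_pos hδ₀) (one_half_lt_one (α := ℝ))
  set A := Real.exp (β * (c + 1)) / β
  refine ⟨2 * j₀ + |Real.log A|, fun x hx J hJ => ?_⟩
  rcases le_or_gt J j₀ with hJj | hJj
  · have : (J : ℝ) ≤ j₀ := by exact_mod_cast hJj
    linarith [abs_nonneg (Real.log A), Nat.cast_nonneg (α := ℝ) j₀,
      Nat.cast_nonneg (α := ℝ) (holeCount G (β / 4) 2 J x)]
  obtain ⟨L, γ, hγ⟩ := exists_isNearGeodesic hGo hf hGc hx hx₀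
  have h_scale : (1 / 2 : ℝ) ^ J ≤ (1 / 2) ^ j₀ :=
    pow_le_pow_of_le_one (by norm_num) (by norm_num) hJj.le
  have hL : (1 / 2 : ℝ) ^ j₀ ≤ L := by
    have h_dist := hγ.dist_source_le hγ.nonneg
    have h_lip : boundaryDist G x₀ ≤ boundaryDist G x + dist x₀ x :=
      Metric.infDist_le_infDist_add_dist
    rw [hγ.target, dist_comm] at h_dist
    linarith
  set good := (Finset.range J).filter fun j => x ∈ holeNhd G (β / 4) 2 j
  have h_bad : ((Finset.Ico j₀ J \ good).card : ℝ) * (2 / β) ≤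
      qhTail (fun t => boundaryDist G (γ t)) L ((1 / 2) ^ J) := by
    refine card_mul_two_div_le_qhTail (hγ.boundaryDist_pos hGo hf)
      hγ.lipschitzWith_boundaryDist.continuous hβ hJj.le hL Finset.sdiff_subset fun i hi s hs => ?_
    simp only [good, Finset.mem_sdiff, Finset.mem_Ico, Finset.mem_filter, Finset.mem_range,
      not_and] at hi
    have hs₀ : 0 ≤ s := le_trans (by positivity) hs.1
    exact hγ.boundaryDist_le_of_notMem_holeNhd hi.1.2.le hJ (hi.2 hi.1.2) hs₀ hs.2
  have h_card : (J : ℝ) ≤ (Finset.Ico j₀ J \ good).card + good.card + j₀ := by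
    have := Finset.le_card_sdiff good (Finset.Ico j₀ J)
    rw [Nat.card_Ico] at this
    exact_mod_cast (by omega : J ≤ (Finset.Ico j₀ J \ good).card + good.card + j₀)
  have h_two : 2 * ((Finset.Ico j₀ J \ good).card : ℝ) ≤ Real.log A + J * Real.log 2 := by
    refine le_trans (le_of_eq ?_) ((mul_le_mul_of_nonneg_left h_bad hβ.le).trans <|
      hγ.mul_qhTail_pow_le hGo hf hβ hQ (h_scale.trans hL))
    field_simp
  rw [holeCount_eq_card]
  nlinarith [le_abs_self (Real.log A), Real.log_two_lt_d9, Nat.cast_nonneg (α := ℝ) J]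

end MeanPorosity

section HoleCount
variable {X : Type*} [PseudoMetricSpace X] {G : Set X} {κ r : ℝ} {j J : ℕ} {x y : X}

lemma isOpen_holeNhd : IsOpen (holeNhd G κ r j) := by
  have : holeNhd G κ r j = ⋃ z ∈ {z ∈ G | κ * (1 / 2) ^ j < boundaryDist G z ∧
      boundaryDist G z < 4 * (1 / 2) ^ j}, Metric.ball z (r * (1 / 2) ^ j) := by
    ext y
    simp only [holeNhd, Set.mem_ofPred_eq, Set.mem_iUnion, Metric.mem_ball, exists_prop, and_assoc]
  rw [this]
  exact isOpen_biUnion fun _ _ => Metric.isOpen_ball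

lemma measurable_holeCount [MeasurableSpace X] [OpensMeasurableSpace X] :
    Measurable fun y => (holeCount G κ r J y : ℝ≥0∞) := by
  refine (measurable_from_top (f := fun m : ℕ => (m : ℝ≥0∞))).comp ?_
  unfold holeCount
  exact Finset.measurable_sum _ fun _ _ => measurable_const.indicator isOpen_holeNhd.measurableSet

lemma holeCount_succ : holeCount G κ r (J + 1) y =
    holeCount G κ r J y + (holeNhd G κ r J).indicator (fun _ => 1) y :=
  Finset.sum_range_succ _ _

lemma monotone_holeCount : Monotone fun J => holeCount G κ r J y :=
  monotone_nat_of_le_succ fun _ => (Nat.le_add_right _ _).trans_eq holeCount_succ.symm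

lemma add_one_pow_succ_le (s M : ℕ) : (s + 1) ^ (M + 1) ≤ s ^ (M + 1) + (M + 1) * (s + 1) ^ M := by
  induction M with
  | zero => simp
  | succ M ih =>
    calc (s + 1) ^ (M + 1 + 1) = s * (s + 1) ^ (M + 1) + (s + 1) ^ (M + 1) := by ring
      _ ≤ s * (s ^ (M + 1) + (M + 1) * (s + 1) ^ M) + (s + 1) ^ (M + 1) := by gcongr
      _ = s ^ (M + 1 + 1) + (M + 1) * (s * (s + 1) ^ M) + (s + 1) ^ (M + 1) := by ring
      _ ≤ s ^ (M + 1 + 1) + (M + 1) * ((s + 1) * (s + 1) ^ M) + (s + 1) ^ (M + 1) := by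
        gcongr
        exact s.le_succ
      _ = s ^ (M + 1 + 1) + (M + 1 + 1) * (s + 1) ^ (M + 1) := by ring

lemma holeCount_pow_succ_le (M : ℕ) : holeCount G κ r J y ^ (M + 1) ≤
    (M + 1) * ∑ j ∈ Finset.range J,
      (holeNhd G κ r j).indicator (fun y => holeCount G κ r (j + 1) y ^ M) y := by
  induction J with
  | zero => simp [holeCount]
  | succ J ih =>
    rw [Finset.sum_range_succ, mul_add]
    by_cases hy : y ∈ holeNhd G κ r J
    · have h_succ : holeCount G κ r (J + 1) y = holeCount G κ r J y + 1 := by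
        rw [holeCount_succ, Set.indicator_of_mem hy]
      rw [Set.indicator_of_mem hy, h_succ]
      exact (add_one_pow_succ_le _ M).trans (by gcongr)
    · have h_succ : holeCount G κ r (J + 1) y = holeCount G κ r J y := by
        rw [holeCount_succ, Set.indicator_of_notMem hy, add_zero]
      rwa [Set.indicator_of_notMem hy, h_succ, mul_zero, add_zero]

lemma holeCount_le_of_dist_lt (hr : 0 < r) (hxy : dist x y < (r + 2) * (1 / 2) ^ j) :
    holeCount G κ r (j + 1) y ≤ holeCount G κ (2 * r + 2) (j + 1) x := by
  refine Finset.sum_le_sum fun i hi => Set.indicator_apply_le' ?_ fun _ => Nat.zero_le _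
  rintro ⟨z, hz, hδz, hδz', hyz⟩
  have h_scale : (1 / 2 : ℝ) ^ j ≤ (1 / 2) ^ i :=
    pow_le_pow_of_le_one (by norm_num) (by norm_num) (Nat.lt_succ_iff.1 (Finset.mem_range.1 hi))
  rw [Set.indicator_of_mem]
  refine ⟨z, hz, hδz, hδz', ?_⟩
  calc dist x z ≤ dist x y + dist y z := dist_triangle x y z
    _ < (r + 2) * (1 / 2) ^ i + r * (1 / 2) ^ i :=
        add_lt_add_of_lt_of_le (hxy.trans_le (by gcongr)) hyz.le
    _ = (2 * r + 2) * (1 / 2) ^ i := by ring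

/-- The points of `G` whose distance to the boundary is comparable to `2⁻ʲ`. -/
def whitneyShell (G : Set X) (κ : ℝ) (j : ℕ) : Set X :=
  {x ∈ G | κ / 2 * (1 / 2) ^ j < boundaryDist G x ∧ boundaryDist G x < 8 * (1 / 2) ^ j}

lemma whitneyShell_subset : whitneyShell G κ j ⊆ G := fun _ hx => hx.1

lemma isOpen_whitneyShell (hGo : IsOpen G) : IsOpen (whitneyShell G κ j) :=
  have h_cont : Continuous (boundaryDist G) := Metric.continuous_infDist_pt _
  hGo.inter ((isOpen_lt continuous_const h_cont).inter (isOpen_lt h_cont continuous_const))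

lemma exists_sum_indicator_whitneyShell_le (hκ : 0 < κ) : ∃ K : ℕ, ∀ (J : ℕ) (x : X),
    ∑ j ∈ Finset.range J, (whitneyShell G κ j).indicator (1 : X → ℝ≥0∞) x ≤ K := by
  classical
  obtain ⟨m, hm⟩ := exists_pow_lt_of_lt_one (show 0 < κ / 16 by positivity)
    (one_half_lt_one (α := ℝ))
  refine ⟨m + 1, fun J x => ?_⟩
  simp only [Set.indicator_apply, Pi.one_apply, Finset.sum_boole]
  refine mod_cast card_le_succ_of_forall_le_add fun a ha b hb => ?_
  obtain ⟨-, -, h_lower, -⟩ := Finset.mem_filter.1 ha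
  obtain ⟨-, -, -, h_upper⟩ := Finset.mem_filter.1 hb
  by_contra! h_lt
  have h_scale : (1 / 2 : ℝ) ^ b ≤ (1 / 2) ^ (a + m) :=
    pow_le_pow_of_le_one (by norm_num) (by norm_num) h_lt.le
  rw [pow_add] at h_scale
  have h_pos : (0 : ℝ) < (1 / 2) ^ a := by positivity
  nlinarith

lemma exists_pointwise_log_le_holeCount {C D : ℝ} (hG : IsMeanPorous G κ C) (hx : x ∈ G)
    (hδ : 0 < boundaryDist G x) (hD : boundaryDist G x ≤ D) :
    ∃ J, 1 + |Real.log (boundaryDist G x)| ≤ (2 + |C| + D) + 2 * holeCount G κ 2 J x := by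
  rcases le_or_gt (boundaryDist G x) 1 with h_le | h_gt
  · obtain ⟨J, hJ, hJ'⟩ := exists_nat_pow_near_of_lt_one hδ h_le (y := 1 / 2)
      (by norm_num) (by norm_num)
    have h_log := Real.log_le_log (by positivity) hJ.le
    rw [Real.log_pow, one_div, Real.log_inv, Nat.cast_succ] at h_log
    refine ⟨J, ?_⟩
    rw [abs_of_nonpos (Real.log_nonpos hδ.le h_le)]
    nlinarith [hG x hx J hJ', le_abs_self C, Real.log_two_lt_d9, Real.log_two_gt_d9,
      Nat.cast_nonneg (α := ℝ) J]
  · refine ⟨0, ?_⟩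
    rw [abs_of_nonneg (Real.log_nonneg h_gt.le)]
    linarith [Real.log_le_sub_one_of_pos hδ, abs_nonneg C,
      Nat.cast_nonneg (α := ℝ) (holeCount G κ 2 0 x)]

variable [MeasurableSpace X] [OpensMeasurableSpace X] {μ : Measure X}

lemma lintegral_holeCount_pow_succ_le (M J : ℕ) :
    ∫⁻ x, (holeCount G κ r J x : ℝ≥0∞) ^ (M + 1) ∂μ ≤
      (M + 1) * ∑ j ∈ Finset.range J,
        ∫⁻ x in holeNhd G κ r j, (holeCount G κ r (j + 1) x : ℝ≥0∞) ^ M ∂μ := by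
  have h_meas : ∀ j, Measurable ((holeNhd G κ r j).indicator
      fun x => (holeCount G κ r (j + 1) x : ℝ≥0∞) ^ M) := fun j =>
    (measurable_holeCount.pow_const M).indicator isOpen_holeNhd.measurableSet
  simp only [← lintegral_indicator isOpen_holeNhd.measurableSet]
  rw [← lintegral_finsetSum _ fun j _ => h_meas j,
    ← lintegral_const_mul _ (Finset.measurable_sum _ fun j _ => h_meas j)]
  refine lintegral_mono fun x => ?_
  have h_cast : ∀ j, ((holeNhd G κ r j).indicator
      (fun x => (holeCount G κ r (j + 1) x : ℝ≥0∞) ^ M) x) =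
      ((holeNhd G κ r j).indicator (fun x => holeCount G κ r (j + 1) x ^ M) x : ℕ) := fun j => by
    by_cases hx : x ∈ holeNhd G κ r j <;> simp [hx]
  simp only [h_cast]
  exact_mod_cast holeCount_pow_succ_le (G := G) (κ := κ) (r := r) (J := J) (y := x) M

lemma sum_setLIntegral_whitneyShell_le (hGo : IsOpen G) {K : ℝ≥0∞} {J : ℕ}
    (hK : ∀ x, ∑ j ∈ Finset.range J, (whitneyShell G κ j).indicator (1 : X → ℝ≥0∞) x ≤ K)
    {h : X → ℝ≥0∞} (hh : Measurable h) :
    ∑ j ∈ Finset.range J, ∫⁻ x in whitneyShell G κ j, h x ∂μ ≤ K * ∫⁻ x in G, h x ∂μ := by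
  have h_restrict : ∀ j, ∫⁻ x in whitneyShell G κ j, h x ∂μ =
      ∫⁻ x in G, (whitneyShell G κ j).indicator 1 x * h x ∂μ := fun j => by
    simp only [← Set.indicator_mul_left, Pi.one_apply, one_mul]
    rw [lintegral_indicator (isOpen_whitneyShell hGo).measurableSet,
      Measure.restrict_restrict_of_subset whitneyShell_subset]
  simp only [h_restrict]
  rw [← lintegral_finsetSum, ← lintegral_const_mul _ hh]
  · refine lintegral_mono fun x => ?_
    rw [← Finset.sum_mul]
    exact mul_le_mul_left (hK x) _
  · exact fun j _ => (measurable_one.indicator (isOpen_whitneyShell hGo).measurableSet).mul hh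

end HoleCount

section HoleCountMoments
variable {E : Type*} [NormedAddCommGroup E] [NormedSpace ℝ E] [FiniteDimensional ℝ E]
  [MeasurableSpace E] [BorelSpace E] {μ : Measure E} [μ.IsAddHaarMeasure]
  {G : Set E} {κ r : ℝ}

lemma lintegral_setLIntegral_indicator_ball {h : E → ℝ≥0∞} (hh : Measurable h) (S : Set E) (r : ℝ) :
    ∫⁻ y, ∫⁻ x in S, (Metric.ball y r).indicator h x ∂μ ∂μ =
      μ (Metric.ball 0 r) * ∫⁻ x in S, h x ∂μ := by
  have h_uncurry : (Function.uncurry fun y x : E => (Metric.ball y r).indicator h x) =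
      {q : E × E | dist q.2 q.1 < r}.indicator fun q => h q.2 := by
    ext q
    simp only [Function.uncurry, Set.indicator, Metric.mem_ball, Set.mem_ofPred_eq]
  rw [lintegral_lintegral_swap, ← lintegral_const_mul _ hh]
  · refine lintegral_congr fun x => ?_
    have h_swap : ∀ y, (Metric.ball y r).indicator h x =
        (Metric.ball x r).indicator (fun _ => h x) y := fun y => by
      simp only [Set.indicator, Metric.mem_ball, dist_comm]
    simp only [h_swap]
    rw [lintegral_indicator Metric.isOpen_ball.measurableSet, setLIntegral_const,
      Measure.addHaar_ball_center, mul_comm]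
  · rw [h_uncurry]
    exact ((hh.comp measurable_snd).indicator
      (isOpen_lt (continuous_snd.dist continuous_fst) continuous_const).measurableSet).aemeasurable

lemma setLIntegral_le_of_forall_exists_ball_subset {A S : Set E} {r ρ : ℝ} (hr : 0 < r)
    (hρ : 0 < ρ) {h h' : E → ℝ≥0∞} (hh' : Measurable h') (hA : MeasurableSet A)
    (hball : ∀ y ∈ A, ∃ z, Metric.ball z r ⊆ S ∩ Metric.ball y ρ)
    (hle : ∀ x y, dist x y < ρ → h y ≤ h' x) :
    ∫⁻ y in A, h y ∂μ ≤
      ENNReal.ofReal ((ρ / r) ^ Module.finrank ℝ E) * ∫⁻ x in S, h' x ∂μ := by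
  set v := μ (Metric.ball 0 r)
  have hv : v ≠ 0 := (Metric.measure_ball_pos μ _ hr).ne'
  have hv' : v ≠ ∞ := measure_ball_lt_top.ne
  have h_pointwise : ∀ y ∈ A, h y * v ≤ ∫⁻ x in S, (Metric.ball y ρ).indicator h' x ∂μ := by
    intro y hy
    obtain ⟨z, hz⟩ := hball y hy
    calc h y * v = ∫⁻ _ in Metric.ball z r, h y ∂μ := by
          rw [setLIntegral_const, Measure.addHaar_ball_center]
      _ ≤ ∫⁻ x in Metric.ball z r, (Metric.ball y ρ).indicator h' x ∂μ :=
          setLIntegral_mono' Metric.isOpen_ball.measurableSet fun x hx => by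
            rw [Set.indicator_of_mem (hz hx).2]
            exact hle x y (hz hx).2
      _ ≤ _ := lintegral_mono_set fun x hx => (hz hx).1
  have h_ratio : μ (Metric.ball 0 ρ) = ENNReal.ofReal ((ρ / r) ^ Module.finrank ℝ E) * v := by
    rw [← Measure.addHaar_ball_mul_of_pos μ 0 (div_pos hρ hr), div_mul_cancel₀ _ hr.ne']
  rw [← ENNReal.mul_le_mul_iff_left hv hv', ← lintegral_mul_const' _ _ hv']
  calc ∫⁻ y in A, h y * v ∂μ
      ≤ ∫⁻ y in A, ∫⁻ x in S, (Metric.ball y ρ).indicator h' x ∂μ ∂μ :=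
        setLIntegral_mono' hA h_pointwise
    _ ≤ ∫⁻ y, ∫⁻ x in S, (Metric.ball y ρ).indicator h' x ∂μ ∂μ := setLIntegral_le_lintegral _ _
    _ = _ := by rw [lintegral_setLIntegral_indicator_ball hh', h_ratio, mul_right_comm]

lemma setLIntegral_holeNhd_le (hGo : IsOpen G) (hκ : 0 < κ) (hr : 0 < r) (j : ℕ)
    {h h' : E → ℝ≥0∞} (hh' : Measurable h')
    (hle : ∀ x y, dist x y < (r + 2) * (1 / 2) ^ j → h y ≤ h' x) :
    ∫⁻ y in holeNhd G κ r j, h y ∂μ ≤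
      ENNReal.ofReal (((r + 2) / (κ / 2)) ^ Module.finrank ℝ E) *
        ∫⁻ x in whitneyShell G κ j, h' x ∂μ := by
  have h_pos : (0 : ℝ) < (1 / 2) ^ j := by positivity
  rw [← mul_div_mul_right (r + 2) (κ / 2) h_pos.ne']
  refine setLIntegral_le_of_forall_exists_ball_subset (by positivity) (by positivity) hh'
    isOpen_holeNhd.measurableSet ?_ hle
  rintro y ⟨z, hz, hδz, hδz', hyz⟩
  refine ⟨z, fun x hx => ?_⟩
  rw [Metric.mem_ball] at hx
  have h_lower : boundaryDist G z ≤ boundaryDist G x + dist z x :=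
    Metric.infDist_le_infDist_add_dist
  have h_upper : boundaryDist G x ≤ boundaryDist G z + dist x z :=
    Metric.infDist_le_infDist_add_dist
  have h_triangle := dist_triangle_right x y z
  rw [dist_comm] at h_lower
  refine ⟨⟨ball_boundaryDist_subset hGo hz ?_, by linarith, by linarith⟩, ?_⟩
  · rw [Metric.mem_ball]
    linarith
  · rw [Metric.mem_ball]
    linarith

lemma exists_forall_setLIntegral_holeCount_pow_le (hGo : IsOpen G) (hGb : Bornology.IsBounded G)
    (hκ : 0 < κ) (hr : 0 < r) (M : ℕ) :
    ∃ C ≠ ∞, ∀ J, ∫⁻ x in G, (holeCount G κ r J x : ℝ≥0∞) ^ M ∂μ ≤ C := by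
  induction M generalizing r with
  | zero => exact ⟨μ G, hGb.measure_lt_top.ne, fun J => by simp⟩
  | succ M ih =>
    obtain ⟨C, hC, hJ⟩ := ih (r := 2 * r + 2) (by positivity)
    obtain ⟨K, hK⟩ := exists_sum_indicator_whitneyShell_le (G := G) hκ
    set A := ENNReal.ofReal (((r + 2) / (κ / 2)) ^ Module.finrank ℝ E)
    refine ⟨(M + 1) * (A * (K * C)), by finiteness, fun J => ?_⟩
    calc ∫⁻ x in G, (holeCount G κ r J x : ℝ≥0∞) ^ (M + 1) ∂μ
        ≤ (M + 1) * ∑ j ∈ Finset.range J,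
            ∫⁻ x in holeNhd G κ r j, (holeCount G κ r (j + 1) x : ℝ≥0∞) ^ M ∂μ :=
          (setLIntegral_le_lintegral _ _).trans (lintegral_holeCount_pow_succ_le M J)
      _ ≤ (M + 1) * ∑ j ∈ Finset.range J, A * ∫⁻ x in whitneyShell G κ j,
            (holeCount G κ (2 * r + 2) J x : ℝ≥0∞) ^ M ∂μ := by
          gcongr with j hj
          refine setLIntegral_holeNhd_le hGo hκ hr j (measurable_holeCount.pow_const M)
            fun x y hxy => ?_
          have h_count := (holeCount_le_of_dist_lt (G := G) (κ := κ) hr hxy).trans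
            (monotone_holeCount (Finset.mem_range.1 hj))
          gcongr
      _ ≤ (M + 1) * (A * (K * C)) := by
          rw [← Finset.mul_sum]
          gcongr
          exact (sum_setLIntegral_whitneyShell_le hGo (hK J)
            (measurable_holeCount.pow_const M)).trans (by gcongr; exact hJ J)

lemma IsMeanPorous.setLIntegral_one_add_abs_log_rpow_ne_top {C : ℝ} (hG : IsMeanPorous G κ C)
    (hκ : 0 < κ) (hGo : IsOpen G) (hGb : Bornology.IsBounded G) (hf : (frontier G).Nonempty)
    (s : ℝ) : ∫⁻ x in G, ENNReal.ofReal ((1 + |Real.log (boundaryDist G x)|) ^ s) ∂μ ≠ ∞ := by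
  obtain ⟨D, hD, hDG⟩ := exists_boundaryDist_le hGb hf
  set M := ⌈s⌉₊
  obtain ⟨B, hB, hBJ⟩ := exists_forall_setLIntegral_holeCount_pow_le (μ := μ) hGo hGb hκ two_pos M
  set A := ENNReal.ofReal (2 + |C| + D)
  have h_pointwise : ∀ x ∈ G, ENNReal.ofReal ((1 + |Real.log (boundaryDist G x)|) ^ s) ≤
      2 ^ (M - 1) * (A ^ M + 2 ^ M * ⨆ J, (holeCount G κ 2 J x : ℝ≥0∞) ^ M) := by
    intro x hx
    obtain ⟨J, hJ⟩ := exists_pointwise_log_le_holeCount hG hx (boundaryDist_pos hGo hf hx)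
      (hDG x hx)
    have h_one : 1 ≤ 1 + |Real.log (boundaryDist G x)| := le_add_of_nonneg_right (abs_nonneg _)
    calc ENNReal.ofReal ((1 + |Real.log (boundaryDist G x)|) ^ s)
        ≤ ENNReal.ofReal (((2 + |C| + D) + 2 * holeCount G κ 2 J x) ^ M) := by
          rw [← Real.rpow_natCast]
          exact ENNReal.ofReal_le_ofReal <|
            (Real.rpow_le_rpow_of_exponent_le h_one (Nat.le_ceil s)).trans <|
              Real.rpow_le_rpow (by positivity) hJ (Nat.cast_nonneg M)
      _ ≤ ENNReal.ofReal (2 ^ (M - 1) * ((2 + |C| + D) ^ M + (2 * holeCount G κ 2 J x) ^ M)) :=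
          ENNReal.ofReal_le_ofReal (add_pow_le (by positivity) (by positivity) M)
      _ = 2 ^ (M - 1) * (A ^ M + 2 ^ M * (holeCount G κ 2 J x : ℝ≥0∞) ^ M) := by
          rw [mul_pow, ENNReal.ofReal_mul (by positivity), ENNReal.ofReal_pow zero_le_two,
            ENNReal.ofReal_add (by positivity) (by positivity), ENNReal.ofReal_mul (by positivity),
            ENNReal.ofReal_pow zero_le_two, ENNReal.ofReal_pow (by positivity),
            ENNReal.ofReal_pow (by positivity), ENNReal.ofReal_natCast, ENNReal.ofReal_ofNat]
      _ ≤ _ := by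
          gcongr
          exact le_iSup (fun J => (holeCount G κ 2 J x : ℝ≥0∞) ^ M) J
  have h_sup : ∫⁻ x in G, ⨆ J, (holeCount G κ 2 J x : ℝ≥0∞) ^ M ∂μ ≤ B := by
    rw [lintegral_iSup (fun J => measurable_holeCount.pow_const M)]
    · exact iSup_le hBJ
    · exact fun i j hij x => pow_le_pow_left' (Nat.cast_le.2 (monotone_holeCount hij)) M
  refine ne_top_of_le_ne_top ?_ (setLIntegral_mono' hGo.measurableSet h_pointwise)
  rw [lintegral_const_mul' _ _ (by finiteness), lintegral_add_left measurable_const,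
    setLIntegral_const, lintegral_const_mul' _ _ (by finiteness)]
  have hμG : μ G ≠ ∞ := hGb.measure_lt_top.ne
  have h_sup' := ne_top_of_le_ne_top hB h_sup
  finiteness

end HoleCountMoments

section Jensen
variable {α : Type*} [MeasurableSpace α] {ν : Measure α} {p : ℝ}

lemma laverage_rpow_le {f : α → ℝ≥0∞} (hf : AEMeasurable f ν) (hp : 1 ≤ p) :
    (⨍⁻ x, f x ∂ν) ^ p ≤ ⨍⁻ x, f x ^ p ∂ν := by
  have hp₀ : 0 < p := zero_lt_one.trans_le hp
  set ν' := (ν Set.univ)⁻¹ • ν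
  have h_le : ∫⁻ x, f x ∂ν' ≤ (∫⁻ x, f x ^ p ∂ν') ^ (1 / p) * ν' Set.univ ^ (1 - 1 / p) := by
    simpa only [eLpNorm'_eq_lintegral_enorm, enorm_eq_self, ENNReal.rpow_one, div_one] using
      eLpNorm'_le_eLpNorm'_mul_rpow_measure_univ zero_lt_one hp
        (hf.smul_measure _).aestronglyMeasurable
  have h_univ : ν' Set.univ ^ (1 - 1 / p) ≤ 1 :=
    ENNReal.rpow_le_one (ENNReal.inv_mul_le_one _) (sub_nonneg.2 ((div_le_one hp₀).2 hp))
  rw [laverage, laverage, ← ENNReal.le_rpow_inv_iff hp₀, inv_eq_one_div p]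
  exact h_le.trans (mul_le_of_le_one_right' h_univ)

lemma enorm_sub_average_rpow_le {F : Type*} [NormedAddCommGroup F] [NormedSpace ℝ F]
    [CompleteSpace F] [IsFiniteMeasure ν] [NeZero ν] {u : α → F} (hu : Integrable u ν) (c : F)
    (hp : 1 ≤ p) : ‖c - ⨍ x, u x ∂ν‖ₑ ^ p ≤ ⨍⁻ x, ‖c - u x‖ₑ ^ p ∂ν := by
  have h_sub : c - ⨍ x, u x ∂ν = ⨍ x, (c - u x) ∂ν := by
    rw [average, average, integral_sub (integrable_const c) hu.to_average, integral_const,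
      probReal_univ, one_smul]
  calc ‖c - ⨍ x, u x ∂ν‖ₑ ^ p ≤ (⨍⁻ x, ‖c - u x‖ₑ ∂ν) ^ p := by
        rw [h_sub]
        gcongr
        exact enorm_integral_le_lintegral_enorm _
    _ ≤ ⨍⁻ x, ‖c - u x‖ₑ ^ p ∂ν :=
        laverage_rpow_le (aestronglyMeasurable_const.sub hu.1).enorm hp

lemma setLAverage_le_mul_setLAverage {b B : Set α} {K : ℝ≥0∞} (f : α → ℝ≥0∞) (hb : b ⊆ B)
    (hB : ν B ≠ ∞) (hK : ν B ≤ K * ν b) :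
    ⨍⁻ x in b, f x ∂ν ≤ K * ⨍⁻ x in B, f x ∂ν := by
  rw [setLAverage_eq]
  refine ENNReal.div_le_of_le_mul ?_
  calc ∫⁻ x in b, f x ∂ν ≤ ∫⁻ x in B, f x ∂ν := lintegral_mono_set hb
    _ = ν B * ⨍⁻ x in B, f x ∂ν := (measure_mul_setLAverage f hB).symm
    _ ≤ K * ν b * ⨍⁻ x in B, f x ∂ν := by gcongr
    _ = K * (⨍⁻ x in B, f x ∂ν) * ν b := mul_right_comm _ _ _

end Jensen

section LocalPoincare
variable {E : Type*} [NormedAddCommGroup E] [NormedSpace ℝ E] {u : E → ℝ} {B : Set E} {p : ℝ}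

lemma enorm_sub_le_lintegral_enorm_fderiv [MeasurableSpace E] [BorelSpace E] (hB : Convex ℝ B)
    (hu : ∀ x ∈ B, DifferentiableAt ℝ u x) {x y : E} (hx : x ∈ B) (hy : y ∈ B) :
    ‖u x - u y‖ₑ ≤
      ∫⁻ t in Set.Icc (0 : ℝ) 1, ‖fderiv ℝ u (AffineMap.lineMap x y t)‖ₑ * ‖y - x‖ₑ := by
  set f' : ℝ → ℝ := fun t => fderiv ℝ u (AffineMap.lineMap x y t) (y - x)
  have h_deriv : ∀ t ∈ Set.uIcc (0 : ℝ) 1,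
      HasDerivAt (fun t => u (AffineMap.lineMap x y t)) (f' t) t := by
    intro t ht
    rw [Set.uIcc_of_le zero_le_one] at ht
    exact (hu _ (hB.lineMap_mem hx hy ht)).hasFDerivAt.comp_hasDerivAt t
      AffineMap.hasDerivAt_lineMap
  have h_meas : Measurable f' := (measurable_fderiv_apply_const ℝ u (y - x)).comp
    AffineMap.lineMap_continuous.measurable
  refine le_trans ?_ (lintegral_mono fun t => ContinuousLinearMap.le_opENorm _ _)
  by_cases h_top : ∫⁻ t in Set.Icc (0 : ℝ) 1, ‖f' t‖ₑ = ∞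
  · exact h_top ▸ le_top
  have h_int : IntervalIntegrable f' volume 0 1 := by
    rw [intervalIntegrable_iff_integrableOn_Icc_of_le zero_le_one]
    exact ⟨h_meas.aestronglyMeasurable, lt_top_iff_ne_top.2 h_top⟩
  have h_ftc := intervalIntegral.integral_eq_sub_of_hasDerivAt h_deriv h_int
  rw [AffineMap.lineMap_apply_one, AffineMap.lineMap_apply_zero,
    intervalIntegral.integral_of_le zero_le_one, ← integral_Icc_eq_integral_Ioc] at h_ftc
  rw [enorm_sub_rev, ← h_ftc]
  exact enorm_integral_le_lintegral_enorm _

lemma enorm_sub_rpow_le_lintegral_enorm_fderiv_rpow [MeasurableSpace E] [BorelSpace E]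
    (hB : Convex ℝ B) (hu : ∀ x ∈ B, DifferentiableAt ℝ u x) (hp : 1 ≤ p) {x y : E} (hx : x ∈ B)
    (hy : y ∈ B) : ‖u x - u y‖ₑ ^ p ≤
      edist x y ^ p * ∫⁻ t in Set.Icc (0 : ℝ) 1, ‖fderiv ℝ u (AffineMap.lineMap x y t)‖ₑ ^ p := by
  have hp₀ : 0 ≤ p := zero_le_one.trans hp
  have h_meas : Measurable fun t : ℝ => ‖fderiv ℝ u (AffineMap.lineMap x y t)‖ₑ :=
    (measurable_fderiv ℝ u).enorm.comp AffineMap.lineMap_continuous.measurable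
  have h_jensen := laverage_rpow_le
    (h_meas.aemeasurable (μ := volume.restrict (Set.Icc (0 : ℝ) 1))) hp
  simp only [setLAverage_eq, Real.volume_Icc, sub_zero, ENNReal.ofReal_one, div_one] at h_jensen
  calc ‖u x - u y‖ₑ ^ p
      ≤ ((∫⁻ t in Set.Icc (0 : ℝ) 1, ‖fderiv ℝ u (AffineMap.lineMap x y t)‖ₑ) * edist x y) ^ p := by
        rw [edist_comm, edist_eq_enorm_sub, ← lintegral_mul_const _ h_meas]
        gcongr
        exact enorm_sub_le_lintegral_enorm_fderiv hB hu hx hy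
    _ ≤ _ := by
        rw [ENNReal.mul_rpow_of_nonneg _ _ hp₀, mul_comm]
        gcongr

variable [FiniteDimensional ℝ E] [MeasurableSpace E] [BorelSpace E] {μ : Measure E}
  [μ.IsAddHaarMeasure]

lemma lintegral_comp_add_smul {h : E → ℝ≥0∞} (hh : Measurable h) (a : E) {s : ℝ} (hs : s ≠ 0) :
    ∫⁻ y, h (a + s • y) ∂μ = ENNReal.ofReal |(s ^ Module.finrank ℝ E)⁻¹| * ∫⁻ y, h y ∂μ := by
  calc ∫⁻ y, h (a + s • y) ∂μ = ∫⁻ y, h (a + y) ∂(μ.map (s • ·)) :=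
        (lintegral_map (hh.comp (measurable_const_add a)) (measurable_const_smul s)).symm
    _ = ENNReal.ofReal |(s ^ Module.finrank ℝ E)⁻¹| * ∫⁻ y, h y ∂μ := by
        rw [Measure.map_addHaar_smul μ hs, lintegral_smul_measure, lintegral_add_left_eq_self,
          smul_eq_mul]

lemma setLIntegral_comp_add_smul_le {h : E → ℝ≥0∞} (hh : Measurable h) (a : E) {s : ℝ}
    (hs : 1 / 2 ≤ s) :
    ∫⁻ y in B, h (a + s • y) ∂μ ≤ 2 ^ Module.finrank ℝ E * ∫⁻ y, h y ∂μ := by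
  have hs₀ : 0 < s := one_half_pos.trans_le hs
  refine (setLIntegral_le_lintegral _ _).trans ?_
  rw [lintegral_comp_add_smul hh a hs₀.ne', abs_of_pos (by positivity), ← inv_pow,
    ENNReal.ofReal_pow (by positivity)]
  gcongr
  rw [← ENNReal.ofReal_ofNat]
  exact ENNReal.ofReal_le_ofReal ((inv_le_comm₀ hs₀ two_pos).2 (by rwa [← one_div]))

/- One of `t` and `1 - t` is at least `1/2`; integrating first in the endpoint it multiplies gives
the factor `2 ^ d`. -/
lemma setLIntegral_setLIntegral_comp_lineMap_le {h : E → ℝ≥0∞} (hh : Measurable h) (t : ℝ) :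
    ∫⁻ x in B, ∫⁻ y in B, h (AffineMap.lineMap x y t) ∂μ ∂μ ≤
      2 ^ Module.finrank ℝ E * μ B * ∫⁻ x, h x ∂μ := by
  have h_const : 2 ^ Module.finrank ℝ E * μ B * ∫⁻ x, h x ∂μ =
      ∫⁻ _ in B, 2 ^ Module.finrank ℝ E * ∫⁻ x, h x ∂μ ∂μ := by
    rw [setLIntegral_const, mul_right_comm]
  rw [h_const]
  simp only [AffineMap.lineMap_apply_module]
  rcases le_total (1 / 2) t with ht | ht
  · exact lintegral_mono fun x => setLIntegral_comp_add_smul_le hh _ ht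
  · have h_meas : Measurable (Function.uncurry fun x y : E => h ((1 - t) • x + t • y)) :=
      hh.comp (by fun_prop)
    rw [lintegral_lintegral_swap h_meas.aemeasurable]
    refine lintegral_mono fun y => ?_
    simp only [add_comm _ (t • y)]
    exact setLIntegral_comp_add_smul_le hh _ (by linarith)

lemma setLIntegral_enorm_sub_rpow_le (hB : Convex ℝ B) (hBm : MeasurableSet B)
    (hu : ∀ x ∈ B, DifferentiableAt ℝ u x) {R : ℝ≥0∞} (hR : R ≠ ∞)
    (hBR : ∀ x ∈ B, ∀ y ∈ B, edist x y ≤ R) (hp : 1 ≤ p) :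
    ∫⁻ x in B, ∫⁻ y in B, ‖u x - u y‖ₑ ^ p ∂μ ∂μ ≤
      2 ^ Module.finrank ℝ E * R ^ p * μ B * ∫⁻ x in B, ‖fderiv ℝ u x‖ₑ ^ p ∂μ := by
  have hp₀ : 0 ≤ p := zero_le_one.trans hp
  have hRp : R ^ p ≠ ∞ := ENNReal.rpow_ne_top_of_nonneg hp₀ hR
  set h : E → ℝ≥0∞ := B.indicator fun x => ‖fderiv ℝ u x‖ₑ ^ p with h_def
  have hh : Measurable h := ((measurable_fderiv ℝ u).enorm.pow_const p).indicator hBm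
  set I : Measure ℝ := volume.restrict (Set.Icc 0 1)
  have h_pointwise : ∀ x ∈ B, ∀ y ∈ B,
      ‖u x - u y‖ₑ ^ p ≤ R ^ p * ∫⁻ t, h (AffineMap.lineMap x y t) ∂I := by
    intro x hx y hy
    have h_seg : ∫⁻ t, ‖fderiv ℝ u (AffineMap.lineMap x y t)‖ₑ ^ p ∂I =
        ∫⁻ t, h (AffineMap.lineMap x y t) ∂I :=
      setLIntegral_congr_fun measurableSet_Icc fun t ht =>
        (Set.indicator_of_mem (hB.lineMap_mem hx hy ht) fun x => ‖fderiv ℝ u x‖ₑ ^ p).symm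
    refine (enorm_sub_rpow_le_lintegral_enorm_fderiv_rpow hB hu hp hx hy).trans ?_
    rw [h_seg]
    gcongr
    exact hBR x hx y hy
  have h_fubini : ∫⁻ x in B, ∫⁻ y in B, ∫⁻ t, h (AffineMap.lineMap x y t) ∂I ∂μ ∂μ =
      ∫⁻ t, ∫⁻ x in B, ∫⁻ y in B, h (AffineMap.lineMap x y t) ∂μ ∂μ ∂I := by
    have h_meas : Measurable fun w : (E × ℝ) × E => h (AffineMap.lineMap w.1.1 w.2 w.1.2) := by
      simp only [AffineMap.lineMap_apply_module]
      exact hh.comp (by fun_prop)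
    have h_inner : ∀ x, ∫⁻ y in B, ∫⁻ t, h (AffineMap.lineMap x y t) ∂I ∂μ =
        ∫⁻ t, ∫⁻ y in B, h (AffineMap.lineMap x y t) ∂μ ∂I := fun x =>
      lintegral_lintegral_swap
        (h_meas.comp (show Measurable fun w : E × ℝ => ((x, w.2), w.1) by fun_prop)).aemeasurable
    simp only [h_inner]
    exact lintegral_lintegral_swap h_meas.lintegral_prod_right'.aemeasurable
  calc ∫⁻ x in B, ∫⁻ y in B, ‖u x - u y‖ₑ ^ p ∂μ ∂μ
      ≤ ∫⁻ x in B, ∫⁻ y in B, R ^ p * ∫⁻ t, h (AffineMap.lineMap x y t) ∂I ∂μ ∂μ :=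
        setLIntegral_mono' hBm fun x hx => setLIntegral_mono' hBm fun y hy => h_pointwise x hx y hy
    _ = R ^ p * ∫⁻ t, ∫⁻ x in B, ∫⁻ y in B, h (AffineMap.lineMap x y t) ∂μ ∂μ ∂I := by
        simp only [lintegral_const_mul' _ _ hRp, h_fubini]
    _ ≤ R ^ p * ∫⁻ _, 2 ^ Module.finrank ℝ E * μ B * ∫⁻ x, h x ∂μ ∂I := by
        gcongr
        exact setLIntegral_setLIntegral_comp_lineMap_le hh _
    _ = _ := by
        rw [h_def, lintegral_indicator hBm, setLIntegral_const, Real.volume_Icc]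
        simp only [sub_zero, ENNReal.ofReal_one]
        ring

lemma setLAverage_enorm_sub_rpow_le (hB : Convex ℝ B) (hBm : MeasurableSet B)
    (hu : ∀ x ∈ B, DifferentiableAt ℝ u x) {R : ℝ≥0∞} (hR : R ≠ ∞)
    (hBR : ∀ x ∈ B, ∀ y ∈ B, edist x y ≤ R) (hB₀ : μ B ≠ 0) (hB' : μ B ≠ ∞) (hp : 1 ≤ p) :
    ⨍⁻ x in B, ⨍⁻ y in B, ‖u x - u y‖ₑ ^ p ∂μ ∂μ ≤
      2 ^ Module.finrank ℝ E * R ^ p * ⨍⁻ x in B, ‖fderiv ℝ u x‖ₑ ^ p ∂μ := by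
  simp only [setLAverage_eq, div_eq_mul_inv]
  rw [lintegral_mul_const' _ _ (ENNReal.inv_ne_top.2 hB₀)]
  calc (∫⁻ x in B, ∫⁻ y in B, ‖u x - u y‖ₑ ^ p ∂μ ∂μ) * (μ B)⁻¹ * (μ B)⁻¹
      ≤ 2 ^ Module.finrank ℝ E * R ^ p * μ B * (∫⁻ x in B, ‖fderiv ℝ u x‖ₑ ^ p ∂μ) * (μ B)⁻¹ *
          (μ B)⁻¹ := by
        gcongr
        exact setLIntegral_enorm_sub_rpow_le hB hBm hu hR hBR hp
    _ = 2 ^ Module.finrank ℝ E * R ^ p * ((∫⁻ x in B, ‖fderiv ℝ u x‖ₑ ^ p ∂μ) * (μ B)⁻¹) *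
          (μ B * (μ B)⁻¹) := by ring
    _ = _ := by rw [ENNReal.mul_inv_cancel hB₀ hB', mul_one]

lemma setLAverage_enorm_sub_setAverage_rpow_le (hB : Convex ℝ B) (hBm : MeasurableSet B)
    (hu : ∀ x ∈ B, DifferentiableAt ℝ u x) {R : ℝ≥0∞} (hR : R ≠ ∞)
    (hBR : ∀ x ∈ B, ∀ y ∈ B, edist x y ≤ R) (hB₀ : μ B ≠ 0) (hB' : μ B ≠ ∞) (hp : 1 ≤ p)
    {b₁ b₂ : Set E} (hb₁ : b₁ ⊆ B) (hb₂ : b₂ ⊆ B) (hui : IntegrableOn u b₂ μ) {K : ℝ≥0∞}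
    (hK : K ≠ ∞) (hK₁ : μ B ≤ K * μ b₁) (hK₂ : μ B ≤ K * μ b₂) :
    ⨍⁻ x in b₁, ‖u x - ⨍ y in b₂, u y ∂μ‖ₑ ^ p ∂μ ≤
      K * K * 2 ^ Module.finrank ℝ E * R ^ p * ⨍⁻ x in B, ‖fderiv ℝ u x‖ₑ ^ p ∂μ := by
  have hb₂' : μ b₂ ≠ 0 := fun h => hB₀ (le_zero_iff.1 (by simpa only [h, mul_zero] using hK₂))
  have : IsFiniteMeasure (μ.restrict b₂) :=
    ⟨by simpa only [Measure.restrict_apply_univ] using (measure_mono hb₂).trans_lt hB'.lt_top⟩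
  have : NeZero (μ.restrict b₂) := ⟨by rwa [Ne, Measure.restrict_eq_zero]⟩
  calc ⨍⁻ x in b₁, ‖u x - ⨍ y in b₂, u y ∂μ‖ₑ ^ p ∂μ
      ≤ ⨍⁻ x in b₁, K * ⨍⁻ y in B, ‖u x - u y‖ₑ ^ p ∂μ ∂μ := lintegral_mono fun x =>
        (enorm_sub_average_rpow_le hui (u x) hp).trans
          (setLAverage_le_mul_setLAverage _ hb₂ hB' hK₂)
    _ ≤ K * ⨍⁻ x in B, K * ⨍⁻ y in B, ‖u x - u y‖ₑ ^ p ∂μ ∂μ :=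
        setLAverage_le_mul_setLAverage _ hb₁ hB' hK₁
    _ = K * K * ⨍⁻ x in B, ⨍⁻ y in B, ‖u x - u y‖ₑ ^ p ∂μ ∂μ := by
        rw [laverage, lintegral_const_mul' _ _ hK, mul_assoc]
        rfl
    _ ≤ K * K * (2 ^ Module.finrank ℝ E * R ^ p * ⨍⁻ x in B, ‖fderiv ℝ u x‖ₑ ^ p ∂μ) := by
        gcongr
        exact setLAverage_enorm_sub_rpow_le hB hBm hu hR hBR hB₀ hB' hp
    _ = _ := by ring

end LocalPoincare

section WhitneyAverages
variable {E : Type*} [NormedAddCommGroup E] [NormedSpace ℝ E]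

lemma ball_half_boundaryDist_subset {G : Set E} {z : E} (hGo : IsOpen G) (hz : z ∈ G) :
    Metric.ball z (boundaryDist G z / 2) ⊆ G :=
  (Metric.ball_subset_ball (half_le_self Metric.infDist_nonneg)).trans
    (ball_boundaryDist_subset hGo hz)

variable [MeasurableSpace E]

/-- The average of `u` over the Whitney ball `B(z, δ(z) / 4)`. -/
noncomputable def whitneyAverage (μ : Measure E) (G : Set E) (u : E → ℝ) (z : E) : ℝ :=
  ⨍ x in Metric.ball z (boundaryDist G z / 4), u x ∂μ

/-- The scale-invariant `p`-energy `δ(z) ^ p ⨍ |∇u| ^ p` of `u` on the doubled Whitney ball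
`B(z, δ(z) / 2)`. -/
noncomputable def whitneyEnergy (μ : Measure E) (G : Set E) (u : E → ℝ) (p : ℝ) (z : E) : ℝ≥0∞ :=
  ENNReal.ofReal (boundaryDist G z) ^ p *
    ⨍⁻ x in Metric.ball z (boundaryDist G z / 2), ‖fderiv ℝ u x‖ₑ ^ p ∂μ

variable [FiniteDimensional ℝ E] [BorelSpace E] {μ : Measure E} [μ.IsAddHaarMeasure] {G : Set E}
  {u : E → ℝ} {p : ℝ} {z w : E}

lemma measure_ball_le_pow_mul_measure_ball (x y : E) {r s c : ℝ} (hc : 0 < c) (h : r ≤ c * s) :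
    μ (Metric.ball x r) ≤ ENNReal.ofReal c ^ Module.finrank ℝ E * μ (Metric.ball y s) := by
  calc μ (Metric.ball x r) ≤ μ (Metric.ball x (c * s)) := measure_mono (Metric.ball_subset_ball h)
    _ = ENNReal.ofReal c ^ Module.finrank ℝ E * μ (Metric.ball y s) := by
        rw [Measure.addHaar_ball_mul_of_pos μ x hc, ENNReal.ofReal_pow hc.le,
          Measure.addHaar_ball_center μ y]

lemma setLAverage_enorm_sub_whitneyAverage_rpow_le (hGo : IsOpen G) (hf : (frontier G).Nonempty)
    (hu : DifferentiableOn ℝ u G) (hui : IntegrableOn u G μ) (hp : 1 ≤ p) (hz : z ∈ G)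
    (hzw : dist z w ≤ boundaryDist G z / 8) :
    ⨍⁻ x in Metric.ball z (boundaryDist G z / 4), ‖u x - whitneyAverage μ G u w‖ₑ ^ p ∂μ ≤
      18 ^ Module.finrank ℝ E * whitneyEnergy μ G u p z := by
  have hδ : 0 < boundaryDist G z := boundaryDist_pos hGo hf hz
  have hδz_le : boundaryDist G z ≤ boundaryDist G w + dist z w :=
    Metric.infDist_le_infDist_add_dist
  have hδw_le : boundaryDist G w ≤ boundaryDist G z + dist w z :=
    Metric.infDist_le_infDist_add_dist
  rw [dist_comm] at hδw_le
  have hBG : Metric.ball z (boundaryDist G z / 2) ⊆ G := ball_half_boundaryDist_subset hGo hz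
  have hb_w : Metric.ball w (boundaryDist G w / 4) ⊆ Metric.ball z (boundaryDist G z / 2) := by
    refine Metric.ball_subset_ball' ?_
    rw [dist_comm]
    linarith
  have h_edist : ∀ x ∈ Metric.ball z (boundaryDist G z / 2),
      ∀ y ∈ Metric.ball z (boundaryDist G z / 2),
        edist x y ≤ ENNReal.ofReal (boundaryDist G z) := by
    intro x hx y hy
    rw [edist_dist]
    refine ENNReal.ofReal_le_ofReal ((dist_triangle_right x y z).trans ?_)
    linarith [Metric.mem_ball.1 hx, Metric.mem_ball.1 hy]
  have h_local := setLAverage_enorm_sub_setAverage_rpow_le (convex_ball z (boundaryDist G z / 2))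
    measurableSet_ball (fun x hx => (hu x (hBG hx)).differentiableAt (hGo.mem_nhds (hBG hx)))
    ENNReal.ofReal_ne_top h_edist (Metric.measure_ball_pos μ z (half_pos hδ)).ne'
    measure_ball_lt_top.ne
    hp (Metric.ball_subset_ball (by linarith)) hb_w (hui.mono_set (hb_w.trans hBG))
    (by finiteness)
    (measure_ball_le_pow_mul_measure_ball z z (s := boundaryDist G z / 4) three_pos (by linarith))
    (measure_ball_le_pow_mul_measure_ball z w three_pos (by linarith))
  calc _ ≤ _ := h_local
    _ = 18 ^ Module.finrank ℝ E * whitneyEnergy μ G u p z := by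
        rw [whitneyEnergy, ENNReal.ofReal_ofNat, ← mul_pow, ← mul_pow, mul_assoc]
        norm_num

lemma enorm_whitneyAverage_sub_whitneyAverage_rpow_le (hGo : IsOpen G)
    (hf : (frontier G).Nonempty) (hu : DifferentiableOn ℝ u G) (hui : IntegrableOn u G μ)
    (hp : 1 ≤ p) (hz : z ∈ G) (hzw : dist z w ≤ boundaryDist G z / 8) :
    ‖whitneyAverage μ G u z - whitneyAverage μ G u w‖ₑ ^ p ≤
      18 ^ Module.finrank ℝ E * whitneyEnergy μ G u p z := by
  have hδ : 0 < boundaryDist G z := boundaryDist_pos hGo hf hz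
  have hb : Metric.ball z (boundaryDist G z / 4) ⊆ G :=
    (Metric.ball_subset_ball (by linarith)).trans (ball_half_boundaryDist_subset hGo hz)
  have : IsFiniteMeasure (μ.restrict (Metric.ball z (boundaryDist G z / 4))) :=
    isFiniteMeasure_restrict.2 measure_ball_lt_top.ne
  have : NeZero (μ.restrict (Metric.ball z (boundaryDist G z / 4))) :=
    ⟨by rw [Ne, Measure.restrict_eq_zero]; exact (Metric.measure_ball_pos μ z (by positivity)).ne'⟩
  rw [enorm_sub_rev]
  refine (enorm_sub_average_rpow_le (hui.mono_set hb) (whitneyAverage μ G u w) hp).trans ?_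
  simp only [enorm_sub_rev (whitneyAverage μ G u w)]
  exact setLAverage_enorm_sub_whitneyAverage_rpow_le hGo hf hu hui hp hz hzw

lemma enorm_sub_rpow_le_mul_sum {F : Type*} [NormedAddCommGroup F] (a : ℕ → F) (N : ℕ)
    (hp : 1 ≤ p) :
    ‖a 0 - a N‖ₑ ^ p ≤ N ^ (p - 1) * ∑ k ∈ Finset.range N, ‖a k - a (k + 1)‖ₑ ^ p := by
  calc ‖a 0 - a N‖ₑ ^ p ≤ (∑ k ∈ Finset.range N, ‖a k - a (k + 1)‖ₑ) ^ p := by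
        rw [← Finset.sum_range_sub']
        gcongr
        exact enorm_sum_le (Finset.range N) fun k => a k - a (k + 1)
    _ ≤ N ^ (p - 1) * ∑ k ∈ Finset.range N, ‖a k - a (k + 1)‖ₑ ^ p := by
        simpa only [Finset.card_range] using
          ENNReal.rpow_sum_le_const_mul_sum_rpow (Finset.range N) _ hp

lemma laverage_enorm_sub_rpow_le_mul_sum {α F : Type*} [MeasurableSpace α] [NormedAddCommGroup F]
    {ν : Measure α} {g : ℕ → α → F} (hg : ∀ k, AEStronglyMeasurable (g k) ν) (N : ℕ)
    (hp : 1 ≤ p) :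
    ⨍⁻ y, ‖g 0 y - g N y‖ₑ ^ p ∂ν ≤
      N ^ (p - 1) * ∑ k ∈ Finset.range N, ⨍⁻ y, ‖g k y - g (k + 1) y‖ₑ ^ p ∂ν := by
  have h_meas : ∀ k ∈ Finset.range N, AEMeasurable (fun y => ‖g k y - g (k + 1) y‖ₑ ^ p) ν :=
    fun k _ => ((hg k).sub (hg (k + 1))).enorm.pow_const p
  have hN : (N : ℝ≥0∞) ^ (p - 1) ≠ ∞ :=
    ENNReal.rpow_ne_top_of_nonneg (sub_nonneg.2 hp) (ENNReal.natCast_ne_top N)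
  calc ⨍⁻ y, ‖g 0 y - g N y‖ₑ ^ p ∂ν
      ≤ ⨍⁻ y, N ^ (p - 1) * ∑ k ∈ Finset.range N, ‖g k y - g (k + 1) y‖ₑ ^ p ∂ν :=
        lintegral_mono fun y => enorm_sub_rpow_le_mul_sum (fun k => g k y) N hp
    _ = N ^ (p - 1) * ∑ k ∈ Finset.range N, ⨍⁻ y, ‖g k y - g (k + 1) y‖ₑ ^ p ∂ν := by
        simp only [laverage]
        rw [lintegral_const_mul' _ _ hN,
          lintegral_finsetSum' _ fun k hk => (h_meas k hk).smul_measure _]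

/- Telescope `u y - u_{z N}` along `u y, u_{z 1}, …, u_{z N}`. -/
lemma IsWhitneyChain.setLAverage_enorm_sub_whitneyAverage_rpow_le {β C : ℝ} {x x₀ : E} {N : ℕ}
    {z : ℕ → E} (hz : IsWhitneyChain G β C x x₀ N z) (hGo : IsOpen G)
    (hf : (frontier G).Nonempty) (hu : DifferentiableOn ℝ u G) (hui : IntegrableOn u G μ)
    (hp : 1 ≤ p) :
    ⨍⁻ y in Metric.ball x (boundaryDist G x / 4), ‖u y - whitneyAverage μ G u x₀‖ₑ ^ p ∂μ ≤
      N ^ (p - 1) * (18 ^ Module.finrank ℝ E *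
        ∑ k ∈ Finset.range N, whitneyEnergy μ G u p (z k)) := by
  let g : ℕ → E → ℝ := fun k y => if k = 0 then u y else whitneyAverage μ G u (z k)
  have hx : x ∈ G := hz.source ▸ hz.mem 0
  have hδ : 0 < boundaryDist G x := boundaryDist_pos hGo hf hx
  have h_pos : 0 < μ (Metric.ball x (boundaryDist G x / 4)) :=
    Metric.measure_ball_pos μ x (by positivity)
  have h_ball : Metric.ball x (boundaryDist G x / 4) ⊆ G :=
    (Metric.ball_subset_ball (by linarith)).trans (ball_half_boundaryDist_subset hGo hx)
  have h_meas : ∀ k,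
      AEStronglyMeasurable (g k) (μ.restrict (Metric.ball x (boundaryDist G x / 4))) := fun k => by
    by_cases hk : k = 0
    · simpa only [g, hk, if_true] using (hui.mono_set h_ball).1
    · simpa only [g, hk, if_false] using aestronglyMeasurable_const
  have h_telescope := laverage_enorm_sub_rpow_le_mul_sum h_meas N hp
  simp only [g, if_true, hz.length_pos.ne', if_false, hz.target] at h_telescope
  have h_step : ∀ k ∈ Finset.range N,
      ⨍⁻ y in Metric.ball x (boundaryDist G x / 4), ‖g k y - g (k + 1) y‖ₑ ^ p ∂μ ≤
        18 ^ Module.finrank ℝ E * whitneyEnergy μ G u p (z k) := by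
    intro k hk
    have h_dist := hz.dist_succ_le k (Finset.mem_range.1 hk)
    rcases k.eq_zero_or_pos with rfl | hk₀
    · rw [← hz.source]
      exact _root_.setLAverage_enorm_sub_whitneyAverage_rpow_le hGo hf hu hui hp (hz.mem 0) h_dist
    · simp only [g, hk₀.ne', k.succ_ne_zero, if_false]
      rw [setLAverage_const h_pos.ne' measure_ball_lt_top.ne]
      exact enorm_whitneyAverage_sub_whitneyAverage_rpow_le hGo hf hu hui hp (hz.mem k) h_dist
  refine h_telescope.trans ?_
  rw [Finset.mul_sum (Finset.range N) _ (18 ^ _)]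
  exact mul_le_mul_right (Finset.sum_le_sum h_step) _

end WhitneyAverages

lemma boundaryDist_le_two_mul {X : Type*} [PseudoMetricSpace X] {G : Set X} {w z : X}
    (h : dist w z < boundaryDist G z / 2) :
    boundaryDist G w ≤ 2 * boundaryDist G z ∧ boundaryDist G z ≤ 2 * boundaryDist G w := by
  have h_le : boundaryDist G w ≤ boundaryDist G z + dist w z := Metric.infDist_le_infDist_add_dist
  have h_ge : boundaryDist G z ≤ boundaryDist G w + dist z w := Metric.infDist_le_infDist_add_dist
  rw [dist_comm] at h_ge
  constructor <;> linarith

lemma rpow_le_two_mul_rpow {a b β : ℝ} (ha : 0 ≤ a) (hb : 0 ≤ b) (hβ : 0 ≤ β) (hβ' : β ≤ 1)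
    (hab : a ≤ 2 * b) : a ^ β ≤ 2 * b ^ β := by
  calc a ^ β ≤ (2 * b) ^ β := Real.rpow_le_rpow ha hab hβ
    _ = 2 ^ β * b ^ β := Real.mul_rpow zero_le_two hb
    _ ≤ 2 * b ^ β := by
        gcongr
        exact Real.rpow_le_self_of_one_le one_le_two hβ'

lemma IsWhitneyChain.ball_subset_ball {X : Type*} [PseudoMetricSpace X] {G : Set X} {β C : ℝ}
    {w x x₀ : X} {N : ℕ} {z : ℕ → X} (hz : IsWhitneyChain G β C x x₀ N z) (hC : 0 ≤ C) (hβ : 0 ≤ β)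
    (hβ' : β ≤ 1) {D : ℝ} (hw₀ : 0 < boundaryDist G w) (hwD : boundaryDist G w ≤ D)
    (hD : 1 ≤ D) {k : ℕ} (hk : dist w (z k) < boundaryDist G (z k) / 2) :
    Metric.ball x (boundaryDist G x / 40) ⊆
      Metric.ball w ((4 * C + 3 * D) * boundaryDist G w ^ β) := by
  set ρ := boundaryDist G w ^ β
  have hδw : boundaryDist G w ≤ D * ρ := by
    calc boundaryDist G w = boundaryDist G w ^ (1 - β) * ρ := by
          rw [← Real.rpow_add hw₀, sub_add_cancel, Real.rpow_one]
      _ ≤ D ^ (1 - β) * ρ := by gcongr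
      _ ≤ D * ρ := by
          gcongr
          exact Real.rpow_le_self_of_one_le hD (by linarith)
  have hδz : boundaryDist G (z k) ^ β ≤ 2 * ρ :=
    rpow_le_two_mul_rpow Metric.infDist_nonneg hw₀.le hβ hβ' (boundaryDist_le_two_mul hk).2
  have h_xz : dist x (z k) ≤ 2 * C * ρ := by
    calc dist x (z k) ≤ C * boundaryDist G (z k) ^ β := hz.dist_le k
      _ ≤ C * (2 * ρ) := by gcongr
      _ = 2 * C * ρ := by ring
  have h_xw : dist x w ≤ (2 * C + D) * ρ := by
    linarith [dist_triangle_right x w (z k), (boundaryDist_le_two_mul hk).2]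
  have hδx : boundaryDist G x ≤ boundaryDist G w + dist x w := Metric.infDist_le_infDist_add_dist
  refine Metric.ball_subset_ball' ?_
  have hCρ : 0 ≤ C * ρ := mul_nonneg hC (by positivity)
  linarith

section WhitneyKernel
variable {E : Type*} [NormedAddCommGroup E] [MeasurableSpace E]

/-- The kernel expressing the Whitney energy as an integral of `|∇u| ^ p`: it is the indicator of
`B(z, δ(z) / 2)` divided by the measure of that ball, times `δ(z) ^ p`. -/
noncomputable def whitneyKernel (μ : Measure E) (G : Set E) (p : ℝ) (z : E) : E → ℝ≥0∞ :=
  (Metric.ball z (boundaryDist G z / 2)).indicator fun _ =>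
    ENNReal.ofReal (boundaryDist G z) ^ p / μ (Metric.ball z (boundaryDist G z / 2))

lemma measurable_whitneyKernel [OpensMeasurableSpace E] {μ : Measure E} {G : Set E} {p : ℝ}
    {z : E} : Measurable (whitneyKernel μ G p z) :=
  measurable_const.indicator measurableSet_ball

variable [NormedSpace ℝ E] [BorelSpace E] {μ : Measure E} [μ.IsAddHaarMeasure] {G : Set E}
  {u : E → ℝ} {p : ℝ} {w x x₀ z : E}

lemma whitneyEnergy_eq_setLIntegral_whitneyKernel (hGo : IsOpen G) (hf : (frontier G).Nonempty)
    (hz : z ∈ G) :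
    whitneyEnergy μ G u p z = ∫⁻ x in G, whitneyKernel μ G p z x * ‖fderiv ℝ u x‖ₑ ^ p ∂μ := by
  have hδ : 0 < boundaryDist G z := boundaryDist_pos hGo hf hz
  have h_const : ENNReal.ofReal (boundaryDist G z) ^ p /
      μ (Metric.ball z (boundaryDist G z / 2)) ≠ ∞ :=
    ENNReal.div_ne_top (ENNReal.rpow_ne_top_of_ne_zero (by simpa using hδ) ENNReal.ofReal_ne_top)
      (Metric.measure_ball_pos μ z (by positivity)).ne'
  have h_ind (x : E) : whitneyKernel μ G p z x * ‖fderiv ℝ u x‖ₑ ^ p =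
      (Metric.ball z (boundaryDist G z / 2)).indicator
        (fun x => ENNReal.ofReal (boundaryDist G z) ^ p /
          μ (Metric.ball z (boundaryDist G z / 2)) * ‖fderiv ℝ u x‖ₑ ^ p) x :=
    (Set.indicator_mul_left _ (fun _ => _) fun x => ‖fderiv ℝ u x‖ₑ ^ p).symm
  simp only [h_ind]
  rw [lintegral_indicator measurableSet_ball, Measure.restrict_restrict measurableSet_ball,
    Set.inter_eq_self_of_subset_left (ball_half_boundaryDist_subset hGo hz),
    lintegral_const_mul' _ _ h_const, whitneyEnergy, setLAverage_eq, ← mul_div_assoc,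
    ENNReal.mul_div_right_comm]

variable [FiniteDimensional ℝ E]

/- With `p = d - dβ` the scaling is `δ(z) ^ p / δ(z) ^ d = (δ(z) ^ β) ^ (-d)`, and `δ(z)` is
comparable to `δ(w)`. -/
lemma whitneyKernel_le {β : ℝ} (hGo : IsOpen G) (hf : (frontier G).Nonempty) (hβ : 0 ≤ β)
    (hβ' : β ≤ 1) (hp : p = Module.finrank ℝ E - Module.finrank ℝ E * β) (hz : z ∈ G)
    (hw : w ∈ G) :
    whitneyKernel μ G p z w ≤
      4 ^ Module.finrank ℝ E / μ (Metric.ball w (boundaryDist G w ^ β)) := by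
  refine Set.indicator_apply_le' (fun hwz => ?_) fun _ => zero_le
  have hδz : 0 < boundaryDist G z := boundaryDist_pos hGo hf hz
  have hδw : 0 < boundaryDist G w := boundaryDist_pos hGo hf hw
  have hρ : 0 < boundaryDist G w ^ β := Real.rpow_pos_of_pos hδw β
  have h_cmp : boundaryDist G w ^ β ≤ 4 * boundaryDist G z ^ (β - 1) * (boundaryDist G z / 2) := by
    calc boundaryDist G w ^ β ≤ 2 * boundaryDist G z ^ β :=
          rpow_le_two_mul_rpow hδw.le hδz.le hβ hβ' (boundaryDist_le_two_mul hwz).1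
      _ = 4 * boundaryDist G z ^ (β - 1) * (boundaryDist G z / 2) := by
          rw [Real.rpow_sub_one hδz.ne']
          field_simp
          norm_num
  have h_scale : ENNReal.ofReal (4 * boundaryDist G z ^ (β - 1)) ^ Module.finrank ℝ E *
      ENNReal.ofReal (boundaryDist G z) ^ p = 4 ^ Module.finrank ℝ E := by
    rw [ENNReal.ofReal_mul zero_le_four, mul_pow, ENNReal.ofReal_ofNat, mul_assoc,
      ← ENNReal.ofReal_rpow_of_pos hδz, ← ENNReal.rpow_natCast (_ ^ _), ← ENNReal.rpow_mul,
      ← ENNReal.rpow_add _ _ (by simpa using hδz) (by finiteness), hp]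
    ring_nf
    simp
  have h_vol := measure_ball_le_pow_mul_measure_ball (μ := μ) w z (by positivity) h_cmp
  rw [ENNReal.div_le_iff (Metric.measure_ball_pos μ z (by positivity)).ne' measure_ball_lt_top.ne,
    ← ENNReal.mul_div_right_comm, ENNReal.le_div_iff_mul_le
      (Or.inl (Metric.measure_ball_pos μ w hρ).ne') (Or.inl measure_ball_lt_top.ne), ← h_scale]
  calc _ ≤ ENNReal.ofReal (boundaryDist G z) ^ p * _ := mul_le_mul_right h_vol _
    _ = _ := by ring

namespace IsWhitneyChain
variable {β C : ℝ} {N : ℕ} {z : ℕ → E}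

lemma sum_whitneyKernel_le (hz : IsWhitneyChain G β C x x₀ N z) (hGo : IsOpen G)
    (hf : (frontier G).Nonempty) (hβ : 0 ≤ β) (hβ' : β ≤ 1)
    (hp : p = Module.finrank ℝ E - Module.finrank ℝ E * β) (hw : w ∈ G) :
    ∑ k ∈ Finset.range N, whitneyKernel μ G p (z k) w ≤
      31 * (4 ^ Module.finrank ℝ E / μ (Metric.ball w (boundaryDist G w ^ β))) := by
  classical
  set S := {k ∈ Finset.range N | dist w (z k) < boundaryDist G (z k) / 2} with hS
  have hS_card : S.card ≤ 31 :=
    hz.card_le w S fun k hk => by simpa only [hS, Finset.mem_filter, Finset.mem_range] using hk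
  calc ∑ k ∈ Finset.range N, whitneyKernel μ G p (z k) w = ∑ k ∈ S, whitneyKernel μ G p (z k) w :=
        (Finset.sum_filter_of_ne fun k _ => Set.mem_of_indicator_ne_zero).symm
    _ ≤ S.card • (4 ^ Module.finrank ℝ E / μ (Metric.ball w (boundaryDist G w ^ β))) :=
        Finset.sum_le_card_nsmul _ _ _ fun k _ => whitneyKernel_le hGo hf hβ hβ' hp (hz.mem k) hw
    _ ≤ 31 * (4 ^ Module.finrank ℝ E / μ (Metric.ball w (boundaryDist G w ^ β))) := by
        rw [nsmul_eq_mul]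
        gcongr
        exact_mod_cast hS_card

lemma measure_ball_mul_sum_whitneyKernel_le (hz : IsWhitneyChain G β C x x₀ N z) (hGo : IsOpen G)
    (hf : (frontier G).Nonempty) (hC : 0 ≤ C) (hβ : 0 ≤ β) (hβ' : β ≤ 1)
    (hp : p = Module.finrank ℝ E - Module.finrank ℝ E * β) {D : ℝ} (hw : w ∈ G)
    (hwD : boundaryDist G w ≤ D) (hD : 1 ≤ D) :
    μ (Metric.ball x (boundaryDist G x / 40)) *
        ∑ k ∈ Finset.range N, whitneyKernel μ G p (z k) w ≤
      μ (Metric.ball x (boundaryDist G x / 40) ∩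
          Metric.ball w ((4 * C + 3 * D) * boundaryDist G w ^ β)) *
        (31 * (4 ^ Module.finrank ℝ E / μ (Metric.ball w (boundaryDist G w ^ β)))) := by
  by_cases h_near : ∃ k, dist w (z k) < boundaryDist G (z k) / 2
  · obtain ⟨k, hk⟩ := h_near
    rw [Set.inter_eq_self_of_subset_left
      (hz.ball_subset_ball hC hβ hβ' (boundaryDist_pos hGo hf hw) hwD hD hk)]
    gcongr
    exact hz.sum_whitneyKernel_le hGo hf hβ hβ' hp hw
  · have h_zero : ∑ k ∈ Finset.range N, whitneyKernel μ G p (z k) w = 0 :=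
      Finset.sum_eq_zero fun k _ =>
        Set.indicator_of_notMem (by exact fun hk => h_near ⟨k, hk⟩) _
    rw [h_zero, mul_zero]
    exact zero_le

end IsWhitneyChain

/- The disjoint balls that contribute at `w` all lie in a ball of radius comparable to
`δ(w) ^ β`. -/
lemma tsum_measure_ball_mul_sum_whitneyKernel_le {β C D : ℝ} {N : E → ℕ} {z : E → ℕ → E}
    {U : Set E} (hU : U.Countable)
    (hU_disj : U.PairwiseDisjoint fun x => Metric.ball x (boundaryDist G x / 40))
    (hz : ∀ x ∈ U, IsWhitneyChain G β C x x₀ (N x) (z x)) (hGo : IsOpen G)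
    (hf : (frontier G).Nonempty) (hC : 0 ≤ C) (hβ : 0 ≤ β) (hβ' : β ≤ 1)
    (hp : p = Module.finrank ℝ E - Module.finrank ℝ E * β) (hw : w ∈ G)
    (hwD : boundaryDist G w ≤ D) (hD : 1 ≤ D) :
    ∑' x : U, μ (Metric.ball (x : E) (boundaryDist G (x : E) / 40)) *
        ∑ k ∈ Finset.range (N x), whitneyKernel μ G p (z x k) w ≤
      31 * 4 ^ Module.finrank ℝ E * ENNReal.ofReal (4 * C + 3 * D) ^ Module.finrank ℝ E := by
  have : Countable U := hU.to_subtype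
  set ρ := boundaryDist G w ^ β
  have hρ : 0 < ρ := Real.rpow_pos_of_pos (boundaryDist_pos hGo hf hw) β
  set κ := 31 * (4 ^ Module.finrank ℝ E / μ (Metric.ball w ρ)) with hκ
  set B := Metric.ball w ((4 * C + 3 * D) * ρ)
  have h_disj : ∑' x : U, μ (Metric.ball (x : E) (boundaryDist G (x : E) / 40) ∩ B) ≤ μ B := by
    rw [← measure_iUnion (fun x y hxy => (hU_disj x.2 y.2 (Subtype.coe_injective.ne hxy)).mono
      Set.inter_subset_left Set.inter_subset_left)
      fun x => measurableSet_ball.inter measurableSet_ball]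
    exact measure_mono (Set.iUnion_subset fun x => Set.inter_subset_right)
  calc _ ≤ ∑' x : U, μ (Metric.ball (x : E) (boundaryDist G (x : E) / 40) ∩ B) * κ :=
        ENNReal.tsum_le_tsum fun x =>
          (hz x x.2).measure_ball_mul_sum_whitneyKernel_le hGo hf hC hβ hβ' hp hw hwD hD
    _ = (∑' x : U, μ (Metric.ball (x : E) (boundaryDist G (x : E) / 40) ∩ B)) * κ :=
        ENNReal.tsum_mul_right
    _ ≤ ENNReal.ofReal (4 * C + 3 * D) ^ Module.finrank ℝ E * μ (Metric.ball w ρ) * κ := by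
        gcongr
        exact h_disj.trans (measure_ball_le_pow_mul_measure_ball w w (by linarith) le_rfl)
    _ = 31 * 4 ^ Module.finrank ℝ E * ENNReal.ofReal (4 * C + 3 * D) ^ Module.finrank ℝ E *
          (μ (Metric.ball w ρ) * (μ (Metric.ball w ρ))⁻¹) := by
        rw [hκ, div_eq_mul_inv]
        ring
    _ = _ := by
        rw [ENNReal.mul_inv_cancel (Metric.measure_ball_pos μ w hρ).ne' measure_ball_lt_top.ne,
          mul_one]

end WhitneyKernel

lemma abs_log_le_abs_log_add_one {a b : ℝ} (ha : 0 < a) (hb : 0 < b) (hab : a ≤ 2 * b)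
    (hba : b ≤ 2 * a) : |Real.log a| ≤ |Real.log b| + 1 := by
  have h_two : Real.log 2 ≤ 1 := by linarith [Real.log_le_sub_one_of_pos (zero_lt_two' ℝ)]
  have h_le := Real.log_le_log ha hab
  have h_ge := Real.log_le_log hb hba
  rw [Real.log_mul two_ne_zero hb.ne'] at h_le
  rw [Real.log_mul two_ne_zero ha.ne'] at h_ge
  rw [abs_le]
  constructor <;> linarith [neg_abs_le (Real.log b), le_abs_self (Real.log b)]

section LogWeight
variable {X : Type*} [PseudoMetricSpace X]

/-- The weight `(1 + |log δ(x)|) ^ (1 - p)` compensating, in the `(p, p)`-Poincaré inequality, the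
logarithmically growing length of the Whitney chains. -/
noncomputable def logWeight (G : Set X) (p : ℝ) (x : X) : ℝ≥0∞ :=
  ENNReal.ofReal ((1 + |Real.log (boundaryDist G x)|) ^ (1 - p))

lemma logWeight_ne_zero (G : Set X) (p : ℝ) (x : X) : logWeight G p x ≠ 0 := by
  simp only [logWeight, ne_eq, ENNReal.ofReal_eq_zero, not_le]
  positivity

lemma logWeight_ne_top (G : Set X) (p : ℝ) (x : X) : logWeight G p x ≠ ∞ := ENNReal.ofReal_ne_top

lemma measurable_logWeight [MeasurableSpace X] [OpensMeasurableSpace X] (G : Set X) (p : ℝ) :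
    Measurable (logWeight G p) :=
  (((Metric.continuous_infDist_pt _).measurable.log.abs.const_add 1).pow_const _).ennreal_ofReal

lemma logWeight_rpow (G : Set X) (p t : ℝ) (x : X) :
    logWeight G p x ^ t = ENNReal.ofReal ((1 + |Real.log (boundaryDist G x)|) ^ ((1 - p) * t)) := by
  rw [logWeight, ENNReal.ofReal_rpow_of_pos (by positivity), ← Real.rpow_mul (by positivity)]

lemma IsWhitneyChain.logWeight_le {G : Set X} {β C p : ℝ} {x x₀ y : X} {N : ℕ} {z : ℕ → X}
    (hz : IsWhitneyChain G β C x x₀ N z) (hC : 0 < C) (hp : 1 ≤ p) (hx : 0 < boundaryDist G x)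
    (hy : dist y x < boundaryDist G x / 4) :
    logWeight G p y ≤ ENNReal.ofReal ((2 * C) ^ (p - 1)) * (N : ℝ≥0∞) ^ (1 - p) := by
  have hN : (0 : ℝ) < N := Nat.cast_pos.2 hz.length_pos
  have h_cmp := boundaryDist_le_two_mul (G := G) (w := y) (z := x) (by linarith)
  have h_log : |Real.log (boundaryDist G x)| ≤ |Real.log (boundaryDist G y)| + 1 :=
    abs_log_le_abs_log_add_one hx (by linarith) h_cmp.2 h_cmp.1
  have h_length : N / (2 * C) ≤ 1 + |Real.log (boundaryDist G y)| := by
    rw [div_le_iff₀' (by positivity)]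
    calc (N : ℝ) ≤ C * (1 + |Real.log (boundaryDist G x)|) := hz.length_le
      _ ≤ C * (2 * (1 + |Real.log (boundaryDist G y)|)) := by
          gcongr
          linarith [abs_nonneg (Real.log (boundaryDist G y))]
      _ = 2 * C * (1 + |Real.log (boundaryDist G y)|) := by ring
  calc logWeight G p y ≤ ENNReal.ofReal ((N / (2 * C)) ^ (1 - p)) :=
        ENNReal.ofReal_le_ofReal
          (Real.rpow_le_rpow_of_nonpos (by positivity) h_length (by linarith))
    _ = ENNReal.ofReal ((2 * C) ^ (p - 1) * N ^ (1 - p)) := by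
        rw [Real.div_rpow hN.le (by positivity), ← neg_sub p 1, Real.rpow_neg (by positivity),
          Real.rpow_neg (by positivity), div_inv_eq_mul, mul_comm]
    _ = ENNReal.ofReal ((2 * C) ^ (p - 1)) * (N : ℝ≥0∞) ^ (1 - p) := by
        rw [ENNReal.ofReal_mul (by positivity), ← ENNReal.ofReal_rpow_of_pos hN,
          ENNReal.ofReal_natCast]

end LogWeight

section WeightedPoincare
variable {E : Type*} [NormedAddCommGroup E] [NormedSpace ℝ E] [FiniteDimensional ℝ E] {G : Set E}

lemma exists_countable_pairwiseDisjoint_ball_boundaryDist (hGo : IsOpen G) {D : ℝ}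
    (hf : (frontier G).Nonempty) (hD : ∀ x ∈ G, boundaryDist G x ≤ D) :
    ∃ U ⊆ G, U.Countable ∧ U.PairwiseDisjoint (fun x => Metric.ball x (boundaryDist G x / 40)) ∧
      G ⊆ ⋃ x : U, Metric.ball (x : E) (boundaryDist G (x : E) / 4) := by
  obtain ⟨U, hUG, hU_disj, hU_cover⟩ :=
    Vitali.exists_disjoint_subfamily_covering_enlargement_closedBall G id
      (fun x => boundaryDist G x / 40) (D / 40) (fun x hx => by linarith [hD x hx]) 5 (by norm_num)
  have hU_disj' : U.PairwiseDisjoint fun x => Metric.ball x (boundaryDist G x / 40) :=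
    hU_disj.mono fun _ => Metric.ball_subset_closedBall
  refine ⟨U, hUG, hU_disj'.countable_of_isOpen (fun _ _ => Metric.isOpen_ball) fun x hx =>
    Metric.nonempty_ball.2 (by linarith [boundaryDist_pos hGo hf (hUG hx)]), hU_disj', ?_⟩
  intro w hw
  obtain ⟨x, hxU, h_sub⟩ := hU_cover w hw
  have hwx : w ∈ Metric.closedBall x (5 * (boundaryDist G x / 40)) :=
    h_sub (Metric.mem_closedBall_self (div_nonneg Metric.infDist_nonneg (by norm_num)))
  refine Set.mem_iUnion.2 ⟨⟨x, hxU⟩, Metric.closedBall_subset_ball ?_ hwx⟩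
  linarith [boundaryDist_pos hGo hf (hUG hxU)]

variable [MeasurableSpace E] [BorelSpace E] {μ : Measure E} [μ.IsAddHaarMeasure] {u : E → ℝ}
  {p β C : ℝ} {x₀ : E}

lemma IsWhitneyChain.setLIntegral_mul_logWeight_le {x : E} {N : ℕ} {z : ℕ → E}
    (hz : IsWhitneyChain G β C x x₀ N z) (hGo : IsOpen G) (hf : (frontier G).Nonempty)
    (hC : 0 < C) (hp : 1 ≤ p) (hu : DifferentiableOn ℝ u G) (hui : IntegrableOn u G μ) :
    ∫⁻ y in Metric.ball x (boundaryDist G x / 4),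
        ‖u y - whitneyAverage μ G u x₀‖ₑ ^ p * logWeight G p y ∂μ ≤
      ENNReal.ofReal ((2 * C) ^ (p - 1)) * 180 ^ Module.finrank ℝ E *
        (μ (Metric.ball x (boundaryDist G x / 40)) *
          ∑ k ∈ Finset.range N, whitneyEnergy μ G u p (z k)) := by
  set B := Metric.ball x (boundaryDist G x / 4)
  set A := ENNReal.ofReal ((2 * C) ^ (p - 1))
  set S := ∑ k ∈ Finset.range N, whitneyEnergy μ G u p (z k)
  have hx : 0 < boundaryDist G x := boundaryDist_pos hGo hf (hz.source ▸ hz.mem 0)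
  have hN : (N : ℝ≥0∞) ≠ 0 := Nat.cast_ne_zero.2 hz.length_pos.ne'
  have h_const : A * (N : ℝ≥0∞) ^ (1 - p) ≠ ∞ :=
    ENNReal.mul_ne_top ENNReal.ofReal_ne_top
      (ENNReal.rpow_ne_top_of_ne_zero hN (ENNReal.natCast_ne_top N))
  have h_vol : μ B ≤ 10 ^ Module.finrank ℝ E * μ (Metric.ball x (boundaryDist G x / 40)) := by
    simpa only [ENNReal.ofReal_ofNat] using
      measure_ball_le_pow_mul_measure_ball (μ := μ) x x (c := 10) (by norm_num) (by linarith)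
  calc ∫⁻ y in B, ‖u y - whitneyAverage μ G u x₀‖ₑ ^ p * logWeight G p y ∂μ
      ≤ ∫⁻ y in B, A * (N : ℝ≥0∞) ^ (1 - p) * ‖u y - whitneyAverage μ G u x₀‖ₑ ^ p ∂μ := by
        refine setLIntegral_mono' measurableSet_ball fun y hy => ?_
        rw [mul_comm]
        gcongr
        exact hz.logWeight_le hC hp hx hy
    _ = A * (N : ℝ≥0∞) ^ (1 - p) *
          (μ B * ⨍⁻ y in B, ‖u y - whitneyAverage μ G u x₀‖ₑ ^ p ∂μ) := by
        rw [lintegral_const_mul' _ _ h_const, measure_mul_setLAverage _ measure_ball_lt_top.ne]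
    _ ≤ A * (N : ℝ≥0∞) ^ (1 - p) *
          (10 ^ Module.finrank ℝ E * μ (Metric.ball x (boundaryDist G x / 40)) *
            ((N : ℝ≥0∞) ^ (p - 1) * (18 ^ Module.finrank ℝ E * S))) := by
        gcongr
        exact hz.setLAverage_enorm_sub_whitneyAverage_rpow_le hGo hf hu hui hp
    _ = A * (18 ^ Module.finrank ℝ E * 10 ^ Module.finrank ℝ E) *
          (μ (Metric.ball x (boundaryDist G x / 40)) * S) *
          ((N : ℝ≥0∞) ^ (1 - p) * (N : ℝ≥0∞) ^ (p - 1)) := by ring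
    _ = A * 180 ^ Module.finrank ℝ E * (μ (Metric.ball x (boundaryDist G x / 40)) * S) := by
        rw [← ENNReal.rpow_add _ _ hN (ENNReal.natCast_ne_top N), sub_add_sub_cancel, sub_self,
          ENNReal.rpow_zero, mul_one, ← mul_pow]
        norm_num

lemma tsum_measure_ball_mul_sum_whitneyEnergy_le {D : ℝ} {N : E → ℕ} {z : E → ℕ → E} {U : Set E}
    (hU : U.Countable) (hU_disj : U.PairwiseDisjoint fun x => Metric.ball x (boundaryDist G x / 40))
    (hz : ∀ x ∈ U, IsWhitneyChain G β C x x₀ (N x) (z x)) (hGo : IsOpen G)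
    (hf : (frontier G).Nonempty) (hC : 0 ≤ C) (hβ : 0 ≤ β) (hβ' : β ≤ 1)
    (hp : p = Module.finrank ℝ E - Module.finrank ℝ E * β)
    (hD : ∀ w ∈ G, boundaryDist G w ≤ D) (hD₁ : 1 ≤ D) :
    ∑' x : U, μ (Metric.ball (x : E) (boundaryDist G (x : E) / 40)) *
        ∑ k ∈ Finset.range (N x), whitneyEnergy μ G u p (z x k) ≤
      31 * 4 ^ Module.finrank ℝ E * ENNReal.ofReal (4 * C + 3 * D) ^ Module.finrank ℝ E *
        ∫⁻ w in G, ‖fderiv ℝ u w‖ₑ ^ p ∂μ := by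
  have : Countable U := hU.to_subtype
  have h_meas : Measurable fun w => ‖fderiv ℝ u w‖ₑ ^ p :=
    (measurable_fderiv ℝ u).enorm.pow_const p
  have h_kernel (x : U) : μ (Metric.ball (x : E) (boundaryDist G (x : E) / 40)) *
        ∑ k ∈ Finset.range (N x), whitneyEnergy μ G u p (z x k) =
      ∫⁻ w in G, (μ (Metric.ball (x : E) (boundaryDist G (x : E) / 40)) *
        ∑ k ∈ Finset.range (N x), whitneyKernel μ G p (z x k) w) * ‖fderiv ℝ u w‖ₑ ^ p ∂μ := by
    simp only [mul_assoc, Finset.sum_mul]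
    rw [lintegral_const_mul' _ _ measure_ball_lt_top.ne,
      lintegral_finsetSum _ (by exact fun k _ => measurable_whitneyKernel.mul h_meas)]
    congr 1
    exact Finset.sum_congr rfl fun k _ =>
      whitneyEnergy_eq_setLIntegral_whitneyKernel hGo hf ((hz x x.2).mem k)
  simp only [h_kernel]
  rw [← lintegral_tsum (by exact fun x => ((measurable_const.mul (Finset.measurable_fun_sum _
    fun k _ => measurable_whitneyKernel)).mul h_meas).aemeasurable),
    ← lintegral_const_mul' _ _ (by finiteness)]
  refine setLIntegral_mono' hGo.measurableSet fun w hw => ?_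
  rw [ENNReal.tsum_mul_right]
  gcongr
  exact tsum_measure_ball_mul_sum_whitneyKernel_le hU hU_disj hz hGo hf hC hβ hβ' hp hw (hD w hw)
    hD₁

theorem exists_setLIntegral_mul_logWeight_le (hGo : IsOpen G) (hGb : Bornology.IsBounded G)
    (hf : (frontier G).Nonempty) (hC : 0 < C) (hβ : 0 ≤ β) (hβ' : β ≤ 1)
    (hp : p = Module.finrank ℝ E - Module.finrank ℝ E * β) (hp₁ : 1 ≤ p)
    (hG : ∀ x ∈ G, ∃ N z, IsWhitneyChain G β C x x₀ N z) :
    ∃ K : ℝ≥0∞, K ≠ ∞ ∧ ∀ u : E → ℝ, DifferentiableOn ℝ u G → IntegrableOn u G μ →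
      ∫⁻ x in G, ‖u x - whitneyAverage μ G u x₀‖ₑ ^ p * logWeight G p x ∂μ ≤
        K * ∫⁻ x in G, ‖fderiv ℝ u x‖ₑ ^ p ∂μ := by
  obtain ⟨D, -, hD⟩ := exists_boundaryDist_le hGb hf
  have hD' : ∀ x ∈ G, boundaryDist G x ≤ max D 1 := fun x hx => (hD x hx).trans (le_max_left D 1)
  choose! N z hz using hG
  obtain ⟨U, hUG, hU, hU_disj, hU_cover⟩ :=
    exists_countable_pairwiseDisjoint_ball_boundaryDist hGo hf hD
  have : Countable U := hU.to_subtype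
  set A := ENNReal.ofReal ((2 * C) ^ (p - 1)) * 180 ^ Module.finrank ℝ E
  set K := 31 * 4 ^ Module.finrank ℝ E * ENNReal.ofReal (4 * C + 3 * max D 1) ^ Module.finrank ℝ E
  refine ⟨A * K, by finiteness, fun u hu hui => ?_⟩
  set F := fun x => ‖u x - whitneyAverage μ G u x₀‖ₑ ^ p * logWeight G p x
  calc ∫⁻ x in G, F x ∂μ
      ≤ ∫⁻ x in ⋃ x : U, Metric.ball (x : E) (boundaryDist G (x : E) / 4), F x ∂μ :=
        lintegral_mono_set hU_cover
    _ ≤ ∑' x : U, ∫⁻ y in Metric.ball (x : E) (boundaryDist G (x : E) / 4), F y ∂μ :=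
        lintegral_iUnion_le _ _
    _ ≤ ∑' x : U, A * (μ (Metric.ball (x : E) (boundaryDist G (x : E) / 40)) *
          ∑ k ∈ Finset.range (N x), whitneyEnergy μ G u p (z x k)) :=
        ENNReal.tsum_le_tsum fun x =>
          (hz x (hUG x.2)).setLIntegral_mul_logWeight_le hGo hf hC hp₁ hu hui
    _ = A * ∑' x : U, μ (Metric.ball (x : E) (boundaryDist G (x : E) / 40)) *
          ∑ k ∈ Finset.range (N x), whitneyEnergy μ G u p (z x k) := ENNReal.tsum_mul_left
    _ ≤ A * (K * ∫⁻ x in G, ‖fderiv ℝ u x‖ₑ ^ p ∂μ) := by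
        gcongr
        exact tsum_measure_ball_mul_sum_whitneyEnergy_le hU hU_disj (fun x hx => hz x (hUG hx)) hGo
          hf hC.le hβ hβ' hp hD' (le_max_right D 1)
    _ = A * K * ∫⁻ x in G, ‖fderiv ℝ u x‖ₑ ^ p ∂μ := (mul_assoc _ _ _).symm

end WeightedPoincare

section Unweighting
variable {α : Type*} [MeasurableSpace α] {ν : Measure α} {p q : ℝ}

lemma lintegral_rpow_le_mul_lintegral_mul {f ω : α → ℝ≥0∞} (hf : AEMeasurable f ν)
    (hω : AEMeasurable ω ν) (hω₀ : ∀ x, ω x ≠ 0) (hω_top : ∀ x, ω x ≠ ∞) (hq : 0 < q)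
    (hqp : q < p) :
    ∫⁻ x, f x ^ q ∂ν ≤ (∫⁻ x, ω x ^ (-(q / (p - q))) ∂ν) ^ ((p - q) / p) *
      (∫⁻ x, f x ^ p * ω x ∂ν) ^ (q / p) := by
  have hp : 0 < p := hq.trans hqp
  have hpq : 0 < p - q := sub_pos.2 hqp
  have h_conj : (p / (p - q)).HolderConjugate (p / q) := by
    rw [Real.holderConjugate_iff, one_lt_div hpq, inv_div, inv_div]
    exact ⟨by linarith, by field_simp; ring⟩
  have h_prod (x : α) : ω x ^ (-(q / p)) * (f x ^ p * ω x) ^ (q / p) = f x ^ q := by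
    rw [ENNReal.mul_rpow_of_nonneg _ _ (by positivity), mul_left_comm,
      ← ENNReal.rpow_add _ _ (hω₀ x) (hω_top x), neg_add_cancel, ENNReal.rpow_zero, mul_one,
      ← ENNReal.rpow_mul, mul_div_cancel₀ _ hp.ne']
  have h_weight (x : α) : (ω x ^ (-(q / p))) ^ (p / (p - q)) = ω x ^ (-(q / (p - q))) := by
    rw [← ENNReal.rpow_mul]
    congr 1
    field_simp
  have h_fun (x : α) : ((f x ^ p * ω x) ^ (q / p)) ^ (p / q) = f x ^ p * ω x := by
    rw [← ENNReal.rpow_mul, div_mul_div_cancel₀ hp.ne', div_self hq.ne', ENNReal.rpow_one]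
  have h_holder := ENNReal.lintegral_mul_le_Lp_mul_Lq ν h_conj (hω.pow_const (-(q / p)))
    (((hf.pow_const p).mul hω).pow_const (q / p))
  simpa only [Pi.mul_apply, h_prod, h_weight, h_fun, one_div_div] using h_holder

lemma lintegral_enorm_sub_average_rpow_le {F : Type*} [NormedAddCommGroup F] [NormedSpace ℝ F]
    [CompleteSpace F] [IsFiniteMeasure ν] [NeZero ν] {u : α → F} (hu : Integrable u ν) (c : F)
    (hq : 1 ≤ q) : ∫⁻ x, ‖u x - ⨍ y, u y ∂ν‖ₑ ^ q ∂ν ≤ 2 ^ q * ∫⁻ x, ‖u x - c‖ₑ ^ q ∂ν := by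
  have h_two : (2 : ℝ≥0∞) ^ (q - 1) ≠ ∞ := by finiteness
  have h_avg : ‖c - ⨍ y, u y ∂ν‖ₑ ^ q ≤ ⨍⁻ x, ‖u x - c‖ₑ ^ q ∂ν := by
    simpa only [← enorm_neg (c - u _), neg_sub] using enorm_sub_average_rpow_le hu c hq
  calc ∫⁻ x, ‖u x - ⨍ y, u y ∂ν‖ₑ ^ q ∂ν
      ≤ ∫⁻ x, 2 ^ (q - 1) * (‖u x - c‖ₑ ^ q + ‖c - ⨍ y, u y ∂ν‖ₑ ^ q) ∂ν := by
        refine lintegral_mono fun x => ?_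
        refine le_trans ?_ (ENNReal.rpow_add_le_mul_rpow_add_rpow _ _ hq)
        gcongr
        simpa only [sub_add_sub_cancel] using enorm_add_le (u x - c) (c - ⨍ y, u y ∂ν)
    _ = 2 ^ (q - 1) * (∫⁻ x, ‖u x - c‖ₑ ^ q ∂ν + ν Set.univ * ‖c - ⨍ y, u y ∂ν‖ₑ ^ q) := by
        rw [lintegral_const_mul' _ _ h_two, lintegral_add_right _ measurable_const,
          lintegral_const, mul_comm (ν Set.univ)]
    _ ≤ 2 ^ (q - 1) * (∫⁻ x, ‖u x - c‖ₑ ^ q ∂ν + ν Set.univ * ⨍⁻ x, ‖u x - c‖ₑ ^ q ∂ν) := by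
        gcongr
    _ = 2 ^ q * ∫⁻ x, ‖u x - c‖ₑ ^ q ∂ν := by
        rw [measure_mul_laverage, ← two_mul, ← mul_assoc]
        congr 1
        conv_lhs => rw [← ENNReal.rpow_one 2, ← ENNReal.rpow_mul, one_mul]
        rw [← ENNReal.rpow_add _ _ two_ne_zero ENNReal.ofNat_ne_top, sub_add_cancel]

lemma lintegral_enorm_sub_average_rpow_le_of_weighted {F : Type*} [NormedAddCommGroup F]
    [NormedSpace ℝ F] [CompleteSpace F] [IsFiniteMeasure ν] [NeZero ν] {u : α → F} {ω : α → ℝ≥0∞}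
    {K J : ℝ≥0∞} (hu : Integrable u ν) (c : F) (hω : AEMeasurable ω ν) (hω₀ : ∀ x, ω x ≠ 0)
    (hω_top : ∀ x, ω x ≠ ∞) (hq : 1 ≤ q) (hqp : q < p)
    (h : ∫⁻ x, ‖u x - c‖ₑ ^ p * ω x ∂ν ≤ K * J) :
    ∫⁻ x, ‖u x - ⨍ y, u y ∂ν‖ₑ ^ q ∂ν ≤
      2 ^ q * (∫⁻ x, ω x ^ (-(q / (p - q))) ∂ν) ^ ((p - q) / p) * K ^ (q / p) * J ^ (q / p) := by
  have hq₀ : 0 < q := one_pos.trans_le hq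
  have hqp₀ : 0 ≤ q / p := div_nonneg hq₀.le (hq₀.trans hqp).le
  calc ∫⁻ x, ‖u x - ⨍ y, u y ∂ν‖ₑ ^ q ∂ν ≤ 2 ^ q * ∫⁻ x, ‖u x - c‖ₑ ^ q ∂ν :=
        lintegral_enorm_sub_average_rpow_le hu c hq
    _ ≤ 2 ^ q * ((∫⁻ x, ω x ^ (-(q / (p - q))) ∂ν) ^ ((p - q) / p) * (K * J) ^ (q / p)) := by
        gcongr
        have h_meas : AEMeasurable (fun x => ‖u x - c‖ₑ) ν :=
          (hu.aestronglyMeasurable.sub aestronglyMeasurable_const).enorm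
        refine (lintegral_rpow_le_mul_lintegral_mul h_meas hω hω₀ hω_top hq₀ hqp).trans ?_
        gcongr
    _ = _ := by
        rw [ENNReal.mul_rpow_of_nonneg _ _ hqp₀]
        ring

end Unweighting

lemma toReal_lintegral_enorm_rpow {α F : Type*} [MeasurableSpace α] {ν : Measure α}
    [NormedAddCommGroup F] {f : α → F} {q : ℝ} (hf : AEStronglyMeasurable f ν) (hq : 0 ≤ q) :
    (∫⁻ x, ‖f x‖ₑ ^ q ∂ν).toReal = ∫ x, ‖f x‖ ^ q ∂ν := by
  rw [integral_eq_lintegral_of_nonneg_ae (Filter.Eventually.of_forall fun x => by positivity)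
    (hf.norm.aemeasurable.pow_const q).aestronglyMeasurable]
  simp only [← ofReal_norm, ENNReal.ofReal_rpow_of_nonneg (norm_nonneg _) hq]

section Poincare
variable {n : ℕ} {G : Set (EuclideanSpace ℝ (Fin n))} {p q : ℝ}

lemma supportsPoincare_of_setLIntegral_le (hGo : IsOpen G) (hp : 0 < p) (hq : 0 < q) {C : ℝ≥0∞}
    (hC : C ≠ ∞)
    (h : ∀ u : EuclideanSpace ℝ (Fin n) → ℝ, DifferentiableOn ℝ u G → IntegrableOn u G →
      ∫⁻ x in G, ‖u x - ⨍ y in G, u y‖ₑ ^ q ≤ C * (∫⁻ x in G, ‖fderiv ℝ u x‖ₑ ^ p) ^ (q / p)) :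
    SupportsPoincare G q p := by
  refine ⟨(C ^ (1 / q)).toReal, fun u hu hui hgi => ?_⟩
  have h_fderiv : ∀ x ∈ G, ‖fderivWithin ℝ u G x‖ ^ p = ‖fderiv ℝ u x‖ ^ p := fun x hx => by
    rw [fderivWithin_of_isOpen hGo hx]
  have h_energy : ∫⁻ x in G, ‖fderiv ℝ u x‖ₑ ^ p ≠ ∞ := by
    have h_lt := ((integrableOn_congr_fun h_fderiv hGo.measurableSet).1 hgi).lintegral_lt_top
    simpa only [← ENNReal.ofReal_rpow_of_nonneg (norm_nonneg _) hp.le, ofReal_norm] using h_lt.ne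
  have h_average : (∫ y in G, u y) / (volume G).toReal = ⨍ y in G, u y := by
    rw [setAverage_eq, smul_eq_mul, inv_mul_eq_div, measureReal_def]
  have h_meas : AEStronglyMeasurable (fun x => u x - ⨍ y in G, u y) (volume.restrict G) :=
    hui.aestronglyMeasurable.sub aestronglyMeasurable_const
  rw [setIntegral_congr_fun hGo.measurableSet h_fderiv, h_average]
  simp only [← Real.norm_eq_abs]
  rw [← toReal_lintegral_enorm_rpow h_meas hq.le,
    ← toReal_lintegral_enorm_rpow (measurable_fderiv ℝ u).aestronglyMeasurable hp.le,
    ENNReal.toReal_rpow, ENNReal.toReal_rpow, ← ENNReal.toReal_mul]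
  refine ENNReal.toReal_mono (by finiteness) ?_
  calc (∫⁻ x in G, ‖u x - ⨍ y in G, u y‖ₑ ^ q) ^ (1 / q)
      ≤ (C * (∫⁻ x in G, ‖fderiv ℝ u x‖ₑ ^ p) ^ (q / p)) ^ (1 / q) := by
        gcongr
        exact h u hu hui
    _ = C ^ (1 / q) * (∫⁻ x in G, ‖fderiv ℝ u x‖ₑ ^ p) ^ (1 / p) := by
        rw [ENNReal.mul_rpow_of_nonneg _ _ (by positivity), ← ENNReal.rpow_mul,
          mul_comm (q / p), div_mul_div_cancel₀ hq.ne']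

lemma supportsPoincare_of_weighted (hGo : IsOpen G) (hGne : G.Nonempty)
    (hGb : Bornology.IsBounded G) (hq : 1 ≤ q) (hqp : q < p) {ω : EuclideanSpace ℝ (Fin n) → ℝ≥0∞}
    (hω : Measurable ω) (hω₀ : ∀ x, ω x ≠ 0) (hω_top : ∀ x, ω x ≠ ∞)
    (hω_int : ∫⁻ x in G, ω x ^ (-(q / (p - q))) ≠ ∞) {K : ℝ≥0∞} (hK : K ≠ ∞)
    {m : (EuclideanSpace ℝ (Fin n) → ℝ) → ℝ}
    (h : ∀ u : EuclideanSpace ℝ (Fin n) → ℝ, DifferentiableOn ℝ u G → IntegrableOn u G →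
      ∫⁻ x in G, ‖u x - m u‖ₑ ^ p * ω x ≤ K * ∫⁻ x in G, ‖fderiv ℝ u x‖ₑ ^ p) :
    SupportsPoincare G q p := by
  have : IsFiniteMeasure (volume.restrict G) := isFiniteMeasure_restrict.2 hGb.measure_lt_top.ne
  have : NeZero (volume.restrict G) :=
    ⟨Measure.restrict_eq_zero.not.2 (hGo.measure_pos volume hGne).ne'⟩
  have hq₀ : 0 < q := one_pos.trans_le hq
  have hp₀ : 0 < p := hq₀.trans hqp
  refine supportsPoincare_of_setLIntegral_le hGo hp₀ hq₀ ?_ fun u hu hui =>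
    lintegral_enorm_sub_average_rpow_le_of_weighted hui _ hω.aemeasurable hω₀ hω_top hq hqp
      (h u hu hui)
  exact ENNReal.mul_ne_top (ENNReal.mul_ne_top (by finiteness)
    (ENNReal.rpow_ne_top_of_nonneg (div_nonneg (sub_pos.2 hqp).le hp₀.le) hω_int))
    (ENNReal.rpow_ne_top_of_nonneg (by positivity) hK)

end Poincare

/-- If `β ∈ (0,1)`, `1 ≤ q < n - nβ`, and the bounded domain `G ⊂ ℝⁿ`
satisfies a `β`-quasihyperbolic boundary condition, then `G` supports the
`(q, n - nβ)`-Poincaré inequality. -/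
theorem stmt_13 (n : ℕ) (hn : 2 ≤ n) (G : Set (EuclideanSpace ℝ (Fin n)))
    (hGo : IsOpen G) (hGc : IsConnected G) (hGb : Bornology.IsBounded G)
    (β : ℝ) (hβ : β ∈ Set.Ioo (0:ℝ) 1) (hqhbc : QHBC G β)
    (q : ℝ) (hq : 1 ≤ q) (hq' : q < (n:ℝ) - n * β) :
    SupportsPoincare G q ((n:ℝ) - n * β) := by
  obtain ⟨x₀, hx₀, c, hQ⟩ := hqhbc
  have : Nontrivial (EuclideanSpace ℝ (Fin n)) :=
    Module.nontrivial_of_finrank_pos (R := ℝ) (by rw [finrank_euclideanSpace_fin]; omega)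
  have hf : (frontier G).Nonempty := frontier_nonempty_of_isBounded hGc.nonempty hGb
  obtain ⟨C, hC, h_chain⟩ := hQ.exists_forall_isWhitneyChain hGo hf hGc.isPreconnected hx₀ hβ.1
  obtain ⟨κ, h_porous⟩ := hQ.exists_isMeanPorous hGo hf hGc.isPreconnected hx₀ hβ.1
  obtain ⟨K, hK, h_weighted⟩ := exists_setLIntegral_mul_logWeight_le (μ := volume) hGo hGb hf hC
    hβ.1.le hβ.2.le (by rw [finrank_euclideanSpace_fin]) (hq.trans hq'.le) h_chain
  refine supportsPoincare_of_weighted hGo hGc.nonempty hGb hq hq' (measurable_logWeight G _)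
    (logWeight_ne_zero G _) (logWeight_ne_top G _) ?_ hK h_weighted
  simpa only [logWeight_rpow] using
    h_porous.setLIntegral_one_add_abs_log_rpow_ne_top (div_pos hβ.1 four_pos) hGo hGb hf _
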